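/- arXiv:math/0104011 — 9 statements merged into one kernel-verified Lean document; each statement's English description precedes it below -/
import Mathlib

section
/- For every positive integer m there exist an integer d ≥ 1, integers a_0, …, a_d not all zero, and a function t : ℤ → ℤ such that (i) ∑_{j=0}^{d} a_j · t(n+j) = 0 for every n ∈ ℤ, (ii) t(n) = T(m,n) for every n ≥ 1, and (iii) t(−2−n) = ε_{m,n} · t(n) for every n ∈ ℤ. (Thus the matching counts T(m,n), extrapolated to negative n by a linear recurrence, satisfy the reciprocity relation T(m,−2−n) = ε_{m,n} T(m,n).) -/
open Finset

/-- The m-by-n grid graph on `Fin m × Fin n`: vertices are adjacent iff they agree in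
one coordinate and differ by exactly 1 in the other. -/
def grid (m n : ℕ) : SimpleGraph (Fin m × Fin n) :=
  SimpleGraph.fromRel (fun p q =>
    (p.1 = q.1 ∧ (p.2 : ℕ) + 1 = q.2) ∨ (p.2 = q.2 ∧ (p.1 : ℕ) + 1 = q.1))

/-- A perfect matching: a set of edges of `G` such that every vertex belongs to
exactly one edge of the set. -/
def IsPM {V : Type*} (G : SimpleGraph V) (P : Finset (Sym2 V)) : Prop :=
  (∀ e ∈ P, e ∈ G.edgeSet) ∧ ∀ v : V, ∃! e, e ∈ P ∧ v ∈ e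

/-- `T m n` is the number of perfect matchings of the m-by-n grid graph. -/
noncomputable def T (m n : ℕ) : ℕ :=
  {P : Finset (Sym2 (Fin m × Fin n)) | IsPM (grid m n) P}.ncard

/-- ε_{m,n}: -1 if m ≡ 2 (mod 4) and n is odd, +1 otherwise. -/
def eps (m : ℕ) (n : ℤ) : ℤ := if m % 4 = 2 ∧ Odd n then -1 else 1

set_option linter.unusedSectionVars false

section cover
variable {V : Type*} [DecidableEq V]

def Cov (E : Set (Sym2 V)) (R : Finset V) (P : Finset (Sym2 V)) : Prop :=
  (∀ e ∈ P, e ∈ E) ∧ (∀ e ∈ P, ∀ v ∈ e, v ∈ R) ∧ ∀ v ∈ R, ∃! e, e ∈ P ∧ v ∈ e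

open Classical in
noncomputable def MM (E : Set (Sym2 V)) (R : Finset V) : Finset (Finset (Sym2 V)) :=
  R.sym2.powerset.filter (Cov E R)

open Classical in
theorem mem_MM {E : Set (Sym2 V)} {R : Finset V} {P : Finset (Sym2 V)} :
    P ∈ MM E R ↔ Cov E R P := by
  unfold MM
  rw [Finset.mem_filter, Finset.mem_powerset]
  refine ⟨fun h => h.2, fun h => ⟨fun e he => ?_, h⟩⟩
  rw [Finset.mem_sym2_iff]
  exact h.2.1 e he

theorem exists_mem_sym2 (e : Sym2 V) : ∃ v, v ∈ e := by
  induction e with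
  | h a b => exact ⟨a, by simp⟩

theorem Cov.uniq {E : Set (Sym2 V)} {R : Finset V} {P : Finset (Sym2 V)} (h : Cov E R P)
    {e f : Sym2 V} {v : V} (he : e ∈ P) (hf : f ∈ P) (hve : v ∈ e) (hvf : v ∈ f) : e = f :=
  (h.2.2 v (h.2.1 e he v hve)).unique ⟨he, hve⟩ ⟨hf, hvf⟩

theorem Cov.union {E1 E2 : Set (Sym2 V)} {A B : Finset V} {P Q : Finset (Sym2 V)}
    (hAB : Disjoint A B) (hP : Cov E1 A P) (hQ : Cov E2 B Q) : Cov (E1 ∪ E2) (A ∪ B) (P ∪ Q) := by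
  refine ⟨?_, ?_, ?_⟩
  · intro e he
    rcases Finset.mem_union.1 he with h | h
    · exact Or.inl (hP.1 e h)
    · exact Or.inr (hQ.1 e h)
  · intro e he v hv
    rcases Finset.mem_union.1 he with h | h
    · exact Finset.mem_union_left _ (hP.2.1 e h v hv)
    · exact Finset.mem_union_right _ (hQ.2.1 e h v hv)
  · intro v hv
    rcases Finset.mem_union.1 hv with h | h
    · obtain ⟨e, ⟨he, hve⟩, hu⟩ := hP.2.2 v h
      refine ⟨e, ⟨Finset.mem_union_left _ he, hve⟩, ?_⟩
      rintro f ⟨hf, hvf⟩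
      rcases Finset.mem_union.1 hf with h' | h'
      · exact hu f ⟨h', hvf⟩
      · exact absurd (hQ.2.1 f h' v hvf) (Finset.disjoint_left.1 hAB h)
    · obtain ⟨e, ⟨he, hve⟩, hu⟩ := hQ.2.2 v h
      refine ⟨e, ⟨Finset.mem_union_right _ he, hve⟩, ?_⟩
      rintro f ⟨hf, hvf⟩
      rcases Finset.mem_union.1 hf with h' | h'
      · exact absurd h (Finset.disjoint_left.1 hAB (hP.2.1 f h' v hvf))
      · exact hu f ⟨h', hvf⟩

open Classical in
theorem conv_general (E1 E2 : Set (Sym2 V)) (R : Finset V)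
    (g : Finset (Sym2 V) → Finset (Sym2 V) → ℤ) :
    ∑ A ∈ R.powerset, ∑ x ∈ MM E1 A ×ˢ MM E2 (R \ A), g x.1 x.2 =
    ∑ Z ∈ MM (E1 ∪ E2) R, ∑ Q ∈ Z.powerset.filter
      (fun Q => (∀ e ∈ Q, e ∈ E2) ∧ ∀ e ∈ Z \ Q, e ∈ E1), g (Z \ Q) Q := by
  rw [Finset.sum_sigma', Finset.sum_sigma']
  have key : ∀ A ⊆ R, ∀ P Q, Cov E1 A P → Cov E2 (R \ A) Q → (P ∪ Q) \ Q = P := by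
    intro A hA P Q hP hQ
    apply Finset.union_sdiff_cancel_right
    rw [Finset.disjoint_left]
    intro e he he'
    obtain ⟨v, hv⟩ := exists_mem_sym2 e
    have := hQ.2.1 e he' v hv
    exact (Finset.mem_sdiff.1 this).2 (hP.2.1 e he v hv)
  refine Finset.sum_bij' (fun x _ => ⟨x.2.1 ∪ x.2.2, x.2.2⟩)
    (fun y _ => ⟨R.filter (fun v => ∃ e ∈ y.1 \ y.2, v ∈ e), (y.1 \ y.2, y.2)⟩) ?_ ?_ ?_ ?_ ?_
  · rintro ⟨A, P, Q⟩ h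
    simp only [Finset.mem_sigma, Finset.mem_powerset, Finset.mem_product, mem_MM,
      Finset.mem_filter] at h ⊢
    obtain ⟨hA, hP, hQ⟩ := h
    refine ⟨?_, Finset.subset_union_right, hQ.1, ?_⟩
    · have := Cov.union (Finset.disjoint_sdiff) hP hQ
      rwa [Finset.union_sdiff_of_subset hA] at this
    · rw [key A hA P Q hP hQ]; exact hP.1
  · rintro ⟨Z, Q⟩ h
    simp only [Finset.mem_sigma, Finset.mem_powerset, Finset.mem_product, mem_MM,
      Finset.mem_filter] at h ⊢
    obtain ⟨hZ, hQZ, hQ, hP⟩ := h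
    refine ⟨Finset.filter_subset _ _, ⟨hP, ?_, ?_⟩, ⟨hQ, ?_, ?_⟩⟩
    · intro e he v hv
      rw [Finset.mem_filter]
      exact ⟨hZ.2.1 e (Finset.mem_sdiff.1 he).1 v hv, e, he, hv⟩
    · intro v hv
      obtain ⟨hv, e, he, hve⟩ := Finset.mem_filter.1 hv
      refine ⟨e, ⟨he, hve⟩, ?_⟩
      rintro f ⟨hf, hvf⟩
      exact hZ.uniq (Finset.mem_sdiff.1 hf).1 (Finset.mem_sdiff.1 he).1 hvf hve
    · intro e he v hv
      rw [Finset.mem_sdiff, Finset.mem_filter]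
      refine ⟨hZ.2.1 e (hQZ he) v hv, ?_⟩
      rintro ⟨_, f, hf, hvf⟩
      have := hZ.uniq (Finset.mem_sdiff.1 hf).1 (hQZ he) hvf hv
      subst this
      exact (Finset.mem_sdiff.1 hf).2 he
    · intro v hv
      rw [Finset.mem_sdiff, Finset.mem_filter] at hv
      obtain ⟨e, ⟨he, hve⟩, hu⟩ := hZ.2.2 v hv.1
      refine ⟨e, ⟨?_, hve⟩, fun f hf => hu f ⟨hQZ hf.1, hf.2⟩⟩
      by_contra hc
      exact hv.2 ⟨hv.1, e, Finset.mem_sdiff.2 ⟨he, hc⟩, hve⟩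
  · rintro ⟨A, P, Q⟩ h
    simp only [Finset.mem_sigma, Finset.mem_powerset, Finset.mem_product, mem_MM] at h
    obtain ⟨hA, hP, hQ⟩ := h
    have k := key A hA P Q hP hQ
    have : R.filter (fun v => ∃ e ∈ P, v ∈ e) = A := by
      ext v
      rw [Finset.mem_filter]
      constructor
      · rintro ⟨_, e, he, hv⟩
        exact hP.2.1 e he v hv
      · intro hv
        obtain ⟨e, he, _⟩ := hP.2.2 v hv
        exact ⟨hA hv, e, he.1, he.2⟩
    simp only [k, this]
  · rintro ⟨Z, Q⟩ h
    simp only [Finset.mem_sigma, Finset.mem_powerset, Finset.mem_filter] at h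
    simp only [Finset.sdiff_union_of_subset h.2.1]
  · rintro ⟨A, P, Q⟩ h
    simp only [Finset.mem_sigma, Finset.mem_powerset, Finset.mem_product, mem_MM] at h
    obtain ⟨hA, hP, hQ⟩ := h
    simp only [key A hA P Q hP hQ]

theorem conv_card (E1 E2 : Set (Sym2 V)) (hE : Disjoint E1 E2) (R : Finset V) :
    ((MM (E1 ∪ E2) R).card : ℤ) =
      ∑ A ∈ R.powerset, ((MM E1 A).card : ℤ) * ((MM E2 (R \ A)).card : ℤ) := by
  classical
  have h := conv_general E1 E2 R (fun _ _ => 1)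
  simp only [Finset.sum_const, Finset.card_product, mul_one, nsmul_eq_mul,
    Nat.cast_mul] at h
  rw [h, Finset.card_eq_sum_ones, Nat.cast_sum]
  refine Finset.sum_congr rfl fun Z hZ => ?_
  rw [mem_MM] at hZ
  have : Z.powerset.filter (fun Q => (∀ e ∈ Q, e ∈ E2) ∧ ∀ e ∈ Z \ Q, e ∈ E1)
      = {Z.filter (fun e => e ∈ E2)} := by
    ext Q
    simp only [Finset.mem_filter, Finset.mem_powerset, Finset.mem_singleton]
    constructor
    · rintro ⟨h1, h2, h3⟩
      ext e
      rw [Finset.mem_filter]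
      refine ⟨fun he => ⟨h1 he, h2 e he⟩, fun he => ?_⟩
      by_contra hc
      exact Set.disjoint_left.1 hE (h3 e (Finset.mem_sdiff.2 ⟨he.1, hc⟩)) he.2
    · rintro rfl
      refine ⟨Finset.filter_subset _ _, fun e he => (Finset.mem_filter.1 he).2, fun e he => ?_⟩
      rw [Finset.mem_sdiff, Finset.mem_filter] at he
      rcases hZ.1 e he.1 with h | h
      · exact h
      · exact absurd ⟨he.1, h⟩ he.2
  rw [this]; simp

theorem MM_empty (E : Set (Sym2 V)) : MM E (∅ : Finset V) = {∅} := by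
  ext P
  rw [mem_MM, Finset.mem_singleton]
  constructor
  · intro h
    by_contra hc
    obtain ⟨e, he⟩ := Finset.nonempty_iff_ne_empty.2 hc
    obtain ⟨v, hv⟩ := exists_mem_sym2 e
    simpa using h.2.1 e he v hv
  · rintro rfl
    exact ⟨by simp, by simp, by simp⟩

theorem conv_inv (E : Set (Sym2 V)) (R : Finset V) :
    ∑ A ∈ R.powerset, ((MM E A).card : ℤ) * (∑ Q ∈ MM E (R \ A), (-1 : ℤ) ^ Q.card) =
      if R = ∅ then 1 else 0 := by
  classical
  have h := conv_general E E R (fun _ Q => (-1) ^ Q.card)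
  simp only [Finset.sum_product, Finset.sum_const, nsmul_eq_mul, Set.union_self] at h
  rw [h]
  have : ∀ Z ∈ MM E R, ∑ Q ∈ Z.powerset.filter
      (fun Q => (∀ e ∈ Q, e ∈ E) ∧ ∀ e ∈ Z \ Q, e ∈ E), (-1 : ℤ) ^ Q.card
      = if Z = ∅ then 1 else 0 := by
    intro Z hZ
    rw [mem_MM] at hZ
    rw [← Finset.sum_powerset_neg_one_pow_card]
    congr 1
    apply Finset.filter_true_of_mem
    intro Q hQ
    rw [Finset.mem_powerset] at hQ
    exact ⟨fun e he => hZ.1 e (hQ he), fun e he => hZ.1 e (Finset.mem_sdiff.1 he).1⟩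
  rw [Finset.sum_congr rfl this]
  split_ifs with hR
  · subst hR
    rw [MM_empty]; simp
  · apply Finset.sum_eq_zero
    intro Z hZ
    rw [if_neg]
    rintro rfl
    obtain ⟨v, hv⟩ := Finset.nonempty_iff_ne_empty.2 hR
    obtain ⟨e, he, _⟩ := (mem_MM.1 hZ).2.2 v hv
    simp at he

theorem card_Cov {E : Set (Sym2 V)} (hE : ∀ e ∈ E, ¬ e.IsDiag) {R : Finset V}
    {P : Finset (Sym2 V)} (h : Cov E R P) : R.card = 2 * P.card := by
  have : R = P.biUnion Sym2.toFinset := by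
    ext v
    simp only [Finset.mem_biUnion, Sym2.mem_toFinset]
    exact ⟨fun hv => (h.2.2 v hv).exists, fun ⟨e, he, hv⟩ => h.2.1 e he v hv⟩
  rw [this, Finset.card_biUnion]
  · rw [Finset.sum_congr rfl (fun e he => Sym2.card_toFinset_of_not_isDiag e (hE e (h.1 e he)))]
    simp [mul_comm]
  · intro e he f hf hne
    refine Finset.disjoint_left.2 ?_
    intro v hv hv'
    rw [Sym2.mem_toFinset] at hv hv'
    exact hne (h.uniq he hf hv hv')

theorem MM_map {W : Type*} [DecidableEq W] (f : V ↪ W) (E : Set (Sym2 V)) (E' : Set (Sym2 W))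
    (R : Finset V)
    (hE : ∀ e ∈ R.sym2, e.map f ∈ E' ↔ e ∈ E) :
    (MM E' (R.map f)).card = (MM E R).card := by
  symm
  apply Finset.card_bij (fun P _ => P.map (f.sym2Map))
  · intro P hP
    rw [mem_MM] at hP ⊢
    refine ⟨?_, ?_, ?_⟩
    · intro e he
      obtain ⟨e, he0, rfl⟩ := Finset.mem_map.1 he
      exact (hE e (Finset.mem_sym2_iff.2 (hP.2.1 e he0))).2 (hP.1 e he0)
    · intro e he v hv
      obtain ⟨e, he0, rfl⟩ := Finset.mem_map.1 he
      obtain ⟨w, hw, rfl⟩ := Sym2.mem_map.1 hv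
      exact Finset.mem_map_of_mem _ (hP.2.1 e he0 w hw)
    · intro v hv
      obtain ⟨v, hv0, rfl⟩ := Finset.mem_map.1 hv
      obtain ⟨e, ⟨he, hve⟩, hu⟩ := hP.2.2 v hv0
      refine ⟨e.map f, ⟨Finset.mem_map_of_mem f.sym2Map he, Sym2.mem_map.2 ⟨v, hve, rfl⟩⟩, ?_⟩
      rintro e' ⟨he', hv'⟩
      obtain ⟨e', he0', rfl⟩ := Finset.mem_map.1 he'
      obtain ⟨w, hw, hh⟩ := Sym2.mem_map.1 hv'
      rw [f.injective hh] at hw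
      rw [hu e' ⟨he0', hw⟩]; rfl
  · intro P _ Q _ h
    exact Finset.map_injective _ h
  · intro P' hP'
    rw [mem_MM] at hP'
    have hex : ∀ e ∈ P', ∃ e₀ ∈ R.sym2, e₀.map f = e := by
      intro e he
      have := hP'.2.1 e he
      induction e with
      | h a b =>
        obtain ⟨a, ha, rfl⟩ := Finset.mem_map.1 (this a (by simp))
        obtain ⟨b, hb, rfl⟩ := Finset.mem_map.1 (this b (by simp))
        exact ⟨s(a, b), by simp [ha, hb], rfl⟩
    refine ⟨R.sym2.filter (fun e => e.map f ∈ P'), ?_, ?_⟩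
    · rw [mem_MM]
      refine ⟨?_, ?_, ?_⟩
      · intro e he
        rw [Finset.mem_filter] at he
        exact (hE e he.1).1 (hP'.1 _ he.2)
      · intro e he v hv
        rw [Finset.mem_filter] at he
        exact Finset.mem_sym2_iff.1 he.1 v hv
      · intro v hv
        obtain ⟨e, ⟨he, hve⟩, hu⟩ := hP'.2.2 (f v) (Finset.mem_map_of_mem _ hv)
        obtain ⟨e, he0, rfl⟩ := hex e he
        obtain ⟨w, hw, hh⟩ := Sym2.mem_map.1 hve
        rw [f.injective hh] at hw
        refine ⟨e, ⟨Finset.mem_filter.2 ⟨he0, he⟩, hw⟩, ?_⟩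
        rintro e' ⟨he', hv'⟩
        rw [Finset.mem_filter] at he'
        exact Sym2.map.injective f.injective (hu _ ⟨he'.2, Sym2.mem_map.2 ⟨v, hv', rfl⟩⟩)
    · ext e
      rw [Finset.mem_map]
      constructor
      · rintro ⟨e, he, rfl⟩
        exact (Finset.mem_filter.1 he).2
      · intro he
        obtain ⟨e, he0, rfl⟩ := hex e he
        exact ⟨e, Finset.mem_filter.2 ⟨he0, he⟩, rfl⟩

end cover

def pathE (m : ℕ) : Set (Sym2 (Fin m)) := {e | ∃ i j : Fin m, (i : ℕ) + 1 = j ∧ e = s(i, j)}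
def colE (m n : ℕ) : Set (Sym2 (Fin m × ℕ)) :=
  {e | ∃ i j : Fin m, (i : ℕ) + 1 = j ∧ e = s((i, n), (j, n))}
def horE (m n : ℕ) : Set (Sym2 (Fin m × ℕ)) := {e | ∃ i : Fin m, e = s((i, n), (i, n + 1))}
def bigE (m n : ℕ) : Set (Sym2 (Fin m × ℕ)) := {e | ∃ k < n, e ∈ colE m k ∨ e ∈ horE m k}

def Reg (m n : ℕ) (U : Finset (Fin m)) : Finset (Fin m × ℕ) :=
  (Finset.univ ×ˢ Finset.range n) ∪ U ×ˢ {n}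

theorem mem_Reg {m n : ℕ} {U : Finset (Fin m)} {i : Fin m} {k : ℕ} :
    (i, k) ∈ Reg m n U ↔ k < n ∨ (k = n ∧ i ∈ U) := by
  simp [Reg, and_comm, eq_comm]

noncomputable def aa (m n : ℕ) (U : Finset (Fin m)) : ℤ := ((MM (bigE m n) (Reg m n U)).card : ℤ)
noncomputable def bb (m n : ℕ) (U : Finset (Fin m)) : ℤ :=
  ((MM (bigE m n ∪ colE m n) (Reg m n U)).card : ℤ)

theorem colE_col {m n : ℕ} {e : Sym2 (Fin m × ℕ)} (h : e ∈ colE m n) {v} (hv : v ∈ e) :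
    v.2 = n := by
  obtain ⟨i, j, _, rfl⟩ := h
  rcases Sym2.mem_iff.1 hv with rfl | rfl <;> rfl

theorem horE_col {m n : ℕ} {e : Sym2 (Fin m × ℕ)} (h : e ∈ horE m n) {v} (hv : v ∈ e) :
    v.2 = n ∨ v.2 = n + 1 := by
  obtain ⟨i, rfl⟩ := h
  rcases Sym2.mem_iff.1 hv with rfl | rfl <;> simp

theorem bigE_col {m n : ℕ} {e : Sym2 (Fin m × ℕ)} (h : e ∈ bigE m n) {v} (hv : v ∈ e) :
    v.2 ≤ n := by
  obtain ⟨k, hk, h | h⟩ := h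
  · rw [colE_col h hv]; omega
  · rcases horE_col h hv with h | h <;> omega

theorem bigE_low {m n : ℕ} {e : Sym2 (Fin m × ℕ)} (h : e ∈ bigE m n) : ∃ v ∈ e, v.2 < n := by
  obtain ⟨k, hk, ⟨i, j, _, rfl⟩ | ⟨i, rfl⟩⟩ := h
  · exact ⟨(i, k), by simp, hk⟩
  · exact ⟨(i, k), by simp, hk⟩

theorem MM_card_ne {V : Type*} [DecidableEq V] {E : Set (Sym2 V)} {R : Finset V}
    (h : ((MM E R).card : ℤ) ≠ 0) : ∃ P, Cov E R P := by
  have h' : (MM E R).card ≠ 0 := by exact_mod_cast h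
  obtain ⟨P, hP⟩ := Finset.card_ne_zero.1 h'
  exact ⟨P, mem_MM.1 hP⟩

theorem Reg_inj (m n : ℕ) : Function.Injective (Reg m n) := by
  intro S S' h
  ext i
  have := congrArg (fun A => (i, n) ∈ A) h
  simpa [mem_Reg] using this

theorem bb_eq (m n : ℕ) (U : Finset (Fin m)) :
    bb m n U = ∑ S ∈ U.powerset, aa m n S * ((MM (pathE m) (U \ S)).card : ℤ) := by
  have hd : Disjoint (bigE m n) (colE m n) := by
    rw [Set.disjoint_left]
    intro e he he'
    obtain ⟨v, hv, hlt⟩ := bigE_low he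
    have := colE_col he' hv
    omega
  unfold bb
  rw [conv_card _ _ hd]
  symm
  refine Finset.sum_of_injOn (Reg m n) (Reg_inj m n).injOn ?_ ?_ ?_
  · intro S hS
    rw [Finset.mem_coe, Finset.mem_powerset] at hS ⊢
    rintro ⟨i, k⟩ h
    rw [mem_Reg] at h ⊢
    rcases h with h | h
    · exact Or.inl h
    · exact Or.inr ⟨h.1, hS h.2⟩
  · intro A hA hA'
    rw [Finset.mem_powerset] at hA
    by_contra hne
    obtain ⟨h1, h2⟩ := mul_ne_zero_iff.1 hne
    obtain ⟨Q, hQ⟩ := MM_card_ne h2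
    apply hA'
    refine ⟨U.filter (fun i => (i, n) ∈ A), ?_, ?_⟩
    · rw [Finset.mem_coe, Finset.mem_powerset]; exact Finset.filter_subset _ _
    · ext ⟨i, k⟩
      rw [mem_Reg, Finset.mem_filter]
      constructor
      · rintro (h | ⟨rfl, _, h⟩)
        · by_contra hc
          have hm : (i, k) ∈ Reg m n U \ A :=
            Finset.mem_sdiff.2 ⟨mem_Reg.2 (Or.inl h), hc⟩
          obtain ⟨e, ⟨he, hve⟩, _⟩ := hQ.2.2 _ hm
          have := colE_col (hQ.1 e he) hve
          simp at this
          omega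
        · exact h
      · intro h
        rcases mem_Reg.1 (hA h) with h' | ⟨rfl, h'⟩
        · exact Or.inl h'
        · exact Or.inr ⟨rfl, h', h⟩
  · intro S hS
    rw [Finset.mem_powerset] at hS
    unfold aa
    congr 2
    let f : Fin m ↪ Fin m × ℕ := ⟨fun i => (i, n), fun i j h => (Prod.ext_iff.1 h).1⟩
    have hf : ∀ i, f i = (i, n) := fun _ => rfl
    have hR : Reg m n U \ Reg m n S = (U \ S).map f := by
      ext ⟨i, k⟩
      simp only [Finset.mem_sdiff, mem_Reg, Finset.mem_map, hf,
        Prod.mk.injEq]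
      constructor
      · rintro ⟨h | ⟨rfl, h⟩, h2⟩
        · exact absurd (Or.inl h) h2
        · exact ⟨i, ⟨h, fun hc => h2 (Or.inr ⟨rfl, hc⟩)⟩, rfl, rfl⟩
      · rintro ⟨i, ⟨h, h2⟩, rfl, rfl⟩
        simp [h, h2]
    rw [hR, MM_map f (pathE m)]
    intro e _
    induction e with
    | h a b =>
      simp only [Sym2.map_mk, colE, pathE, Set.mem_ofPred_eq, hf,
        Sym2.eq_iff, Prod.mk.injEq, and_true]

theorem bigE_succ (m n : ℕ) : bigE m (n + 1) = (bigE m n ∪ colE m n) ∪ horE m n := by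
  ext e
  simp only [bigE, Set.mem_union, Set.mem_ofPred_eq, Nat.lt_succ_iff_lt_or_eq]
  constructor
  · rintro ⟨k, hk | rfl, h⟩
    · exact Or.inl (Or.inl ⟨k, hk, h⟩)
    · tauto
  · rintro ((⟨k, hk, h⟩ | h) | h)
    · exact ⟨k, Or.inl hk, h⟩
    · exact ⟨n, Or.inr rfl, Or.inl h⟩
    · exact ⟨n, Or.inr rfl, Or.inr h⟩

theorem hor_partner {m n : ℕ} {B : Finset (Fin m × ℕ)} {P} (h : Cov (horE m n) B P) (i : Fin m) :
    (i, n) ∈ B ↔ (i, n + 1) ∈ B := by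
  constructor
  · intro hi
    obtain ⟨e, ⟨he, hv⟩, _⟩ := h.2.2 _ hi
    obtain ⟨j, rfl⟩ := h.1 e he
    apply h.2.1 _ he
    simp at hv ⊢
    exact hv
  · intro hi
    obtain ⟨e, ⟨he, hv⟩, _⟩ := h.2.2 _ hi
    obtain ⟨j, rfl⟩ := h.1 e he
    apply h.2.1 _ he
    simp at hv ⊢
    exact hv

theorem hor_card (m n : ℕ) (S : Finset (Fin m)) :
    (MM (horE m n) (S ×ˢ {n, n + 1})).card = 1 := by
  rw [Finset.card_eq_one]
  refine ⟨S.image (fun i => s((i, n), (i, n + 1))), ?_⟩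
  ext P
  rw [mem_MM, Finset.mem_singleton]
  constructor
  · intro h
    ext e
    rw [Finset.mem_image]
    constructor
    · intro he
      obtain ⟨i, rfl⟩ := h.1 e he
      have := h.2.1 _ he (i, n) (by simp)
      simp at this
      exact ⟨i, this, rfl⟩
    · rintro ⟨i, hi, rfl⟩
      obtain ⟨e, ⟨he, hv⟩, _⟩ := h.2.2 (i, n) (by simp [hi])
      obtain ⟨j, rfl⟩ := h.1 e he
      simp at hv
      rw [hv]; exact he
  · rintro rfl
    refine ⟨?_, ?_, ?_⟩
    · intro e he
      obtain ⟨i, hi, rfl⟩ := Finset.mem_image.1 he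
      exact ⟨i, rfl⟩
    · intro e he v hv
      obtain ⟨i, hi, rfl⟩ := Finset.mem_image.1 he
      rcases Sym2.mem_iff.1 hv with rfl | rfl <;> simp [hi]
    · rintro ⟨i, k⟩ hv
      simp at hv
      refine ⟨s((i, n), (i, n + 1)), ⟨Finset.mem_image.2 ⟨i, hv.1, rfl⟩, ?_⟩, ?_⟩
      · rcases hv.2 with rfl | rfl <;> simp
      · rintro e ⟨he, hve⟩
        obtain ⟨j, hj, rfl⟩ := Finset.mem_image.1 he
        have : i = j := by
          rcases Sym2.mem_iff.1 hve with h | h <;> exact (Prod.ext_iff.1 h).1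
        rw [this]

theorem aa_succ (m n : ℕ) (S : Finset (Fin m)) : aa m (n + 1) S = bb m n Sᶜ := by
  unfold aa
  have hd : Disjoint (bigE m n ∪ colE m n) (horE m n) := by
    rw [Set.disjoint_left]
    rintro e he ⟨i, rfl⟩
    have hv : (i, n + 1) ∈ s((i, n), (i, n + 1)) := by simp
    rcases he with he | he
    · have := bigE_col he hv
      simp at this
    · have := colE_col he hv
      simp at this
  rw [bigE_succ, conv_card _ _ hd, Finset.sum_eq_single (Reg m n Sᶜ)]
  · have : Reg m (n + 1) S \ Reg m n Sᶜ = S ×ˢ {n, n + 1} := by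
      ext ⟨i, k⟩
      simp only [Finset.mem_sdiff, mem_Reg, Finset.mem_compl, Finset.mem_product,
        Finset.mem_insert, Finset.mem_singleton]
      by_cases hi : i ∈ S <;> simp only [hi] <;> simp <;> omega
    rw [this, hor_card]
    simp [bb]
  · intro A hA hne
    rw [Finset.mem_powerset] at hA
    by_contra hc
    obtain ⟨h1, h2⟩ := mul_ne_zero_iff.1 hc
    obtain ⟨P, hP⟩ := MM_card_ne h1
    obtain ⟨Q, hQ⟩ := MM_card_ne h2
    apply hne
    have hle : ∀ v ∈ A, v.2 ≤ n := by
      intro v hv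
      obtain ⟨e, ⟨he, hve⟩, _⟩ := hP.2.2 v hv
      rcases hP.1 e he with h | h
      · exact bigE_col h hve
      · exact (colE_col h hve).le
    have hge : ∀ v ∈ Reg m (n + 1) S \ A, v.2 = n ∨ v.2 = n + 1 := by
      intro v hv
      obtain ⟨e, ⟨he, hve⟩, _⟩ := hQ.2.2 v hv
      exact horE_col (hQ.1 e he) hve
    have hiff : ∀ i, (i, n) ∉ A ↔ i ∈ S := by
      intro i
      have := hor_partner hQ i
      rw [Finset.mem_sdiff, Finset.mem_sdiff, mem_Reg, mem_Reg] at this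
      have h3 : (i, n + 1) ∉ A := fun h => by have := hle _ h; simp at this
      simpa [h3] using this
    ext ⟨i, k⟩
    rw [mem_Reg, Finset.mem_compl]
    constructor
    · intro h
      have h4 := hle _ h
      simp only at h4
      rcases h4.lt_or_eq with h5 | rfl
      · exact Or.inl h5
      · refine Or.inr ⟨rfl, fun hi => (hiff i).2 hi h⟩
    · rintro (h | ⟨rfl, h⟩)
      · by_contra hcc
        have := hge (i, k) (Finset.mem_sdiff.2 ⟨mem_Reg.2 (Or.inl (by omega)), hcc⟩)
        simp only at this
        omega
      · by_contra hcc
        exact h ((hiff i).1 hcc)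
  · intro h
    exfalso
    apply h
    rw [Finset.mem_powerset]
    rintro ⟨i, k⟩ h
    rw [mem_Reg] at h ⊢
    omega

theorem aa_zero (m : ℕ) (S : Finset (Fin m)) : aa m 0 S = if S = ∅ then 1 else 0 := by
  unfold aa
  split_ifs with h
  · subst h
    have : Reg m 0 ∅ = ∅ := by simp [Reg]
    rw [this, MM_empty]; simp
  · by_contra hc
    obtain ⟨P, hP⟩ := MM_card_ne hc
    obtain ⟨i, hi⟩ := Finset.nonempty_iff_ne_empty.2 h
    obtain ⟨e, ⟨he, _⟩, _⟩ := hP.2.2 (i, 0) (mem_Reg.2 (Or.inr ⟨rfl, hi⟩))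
    obtain ⟨k, hk, _⟩ := hP.1 e he
    omega

theorem T_eq (m n : ℕ) : (T m n : ℤ) = aa m n ∅ := by
  unfold T aa
  have h1 : {P : Finset (Sym2 (Fin m × Fin n)) | IsPM (grid m n) P}
      = ↑(MM (grid m n).edgeSet Finset.univ) := by
    ext P
    rw [Finset.mem_coe, mem_MM]
    simp [IsPM, Cov]
  rw [h1, Set.ncard_coe_finset]
  let f : Fin m × Fin n ↪ Fin m × ℕ := ⟨fun p => (p.1, (p.2 : ℕ)), fun p q h => by
    obtain ⟨h1, h2⟩ := Prod.ext_iff.1 h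
    exact Prod.ext h1 (Fin.ext h2)⟩
  have hf : ∀ p, f p = (p.1, (p.2 : ℕ)) := fun _ => rfl
  have hR : Reg m n ∅ = Finset.univ.map f := by
    ext ⟨i, k⟩
    rw [mem_Reg]
    simp only [Finset.mem_map, Finset.mem_univ, true_and, hf,
        Prod.mk.injEq]
    constructor
    · rintro (h | h)
      · exact ⟨(i, ⟨k, h⟩), rfl, rfl⟩
      · simp at h
    · rintro ⟨⟨a, b⟩, rfl, rfl⟩
      exact Or.inl b.2
  rw [hR, MM_map f (grid m n).edgeSet]
  intro e _
  induction e with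
  | h a b =>
    obtain ⟨⟨a, ha⟩, ⟨k, hk⟩⟩ := a
    obtain ⟨⟨b, hb⟩, ⟨l, hl⟩⟩ := b
    simp only [Sym2.map_mk, hf, SimpleGraph.mem_edgeSet, grid,
      SimpleGraph.fromRel_adj, bigE, colE, horE, Set.mem_ofPred_eq, Sym2.eq_iff, Prod.mk.injEq,
      Fin.mk.injEq, ne_eq]
    constructor
    · rintro ⟨q, hq, ⟨i, j, hij, ⟨⟨rfl, rfl⟩, rfl, rfl⟩ | ⟨⟨rfl, rfl⟩, rfl, rfl⟩⟩ |
        ⟨i, ⟨⟨rfl, rfl⟩, h, rfl⟩ | ⟨⟨rfl, rfl⟩, h, rfl⟩⟩⟩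
      · simp at hij; omega
      · simp at hij; omega
      · simp at h; omega
      · simp at h; omega
    · rintro ⟨hne, (⟨rfl, h⟩ | ⟨rfl, h⟩) | (⟨rfl, h⟩ | ⟨rfl, h⟩)⟩
      · exact ⟨k, hk, Or.inr ⟨⟨a, ha⟩, Or.inl ⟨⟨rfl, rfl⟩, rfl, h.symm⟩⟩⟩
      · exact ⟨k, hk, Or.inl ⟨⟨a, ha⟩, ⟨b, hb⟩, h, Or.inl ⟨⟨rfl, rfl⟩, rfl, rfl⟩⟩⟩
      · exact ⟨l, hl, Or.inr ⟨⟨b, hb⟩, Or.inr ⟨⟨rfl, h.symm⟩, rfl, rfl⟩⟩⟩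
      · exact ⟨l, hl, Or.inl ⟨⟨b, hb⟩, ⟨a, ha⟩, h, Or.inr ⟨⟨rfl, rfl⟩, rfl, rfl⟩⟩⟩

abbrev Mat (m : ℕ) (K : Type) := Matrix (Finset (Fin m)) (Finset (Fin m)) K

noncomputable def NN (m : ℕ) : Mat m ℤ := fun S U =>
  if S ⊆ U then ((MM (pathE m) (U \ S)).card : ℤ) else 0
noncomputable def NI (m : ℕ) : Mat m ℤ := fun S U =>
  if S ⊆ U then ∑ P ∈ MM (pathE m) (U \ S), (-1 : ℤ) ^ P.card else 0
def JJ (m : ℕ) (K : Type) [Zero K] [One K] : Mat m K := fun S U => if U = Sᶜ then 1 else 0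

theorem JJ_mul {m : ℕ} {K : Type} [CommRing K] (X : Mat m K) (S U : Finset (Fin m)) :
    (JJ m K * X) S U = X Sᶜ U := by
  simp [Matrix.mul_apply, JJ]

theorem mul_JJ {m : ℕ} {K : Type} [CommRing K] (X : Mat m K) (S U : Finset (Fin m)) :
    (X * JJ m K) S U = X S Uᶜ := by
  rw [Matrix.mul_apply, Finset.sum_eq_single Uᶜ]
  · simp [JJ]
  · intro A _ hA
    rw [JJ, if_neg, mul_zero]
    rintro rfl
    simp at hA
  · simp

theorem JJ_JJ {m : ℕ} {K : Type} [CommRing K] : JJ m K * JJ m K = 1 := by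
  ext S U
  rw [JJ_mul, JJ, Matrix.one_apply, compl_compl]
  simp [eq_comm]

theorem NN_NI (m : ℕ) : NN m * NI m = 1 := by
  ext S U
  rw [Matrix.mul_apply, Matrix.one_apply]
  by_cases hSU : S ⊆ U
  · have h := conv_inv (pathE m) (U \ S)
    have e : (if U \ S = ∅ then (1 : ℤ) else 0) = if S = U then 1 else 0 := by
      congr 1
      rw [Finset.sdiff_eq_empty_iff_subset]
      exact propext ⟨fun h => hSU.antisymm h, fun h => h ▸ subset_rfl⟩
    rw [← e, ← h]
    symm
    refine Finset.sum_of_injOn (fun A => S ∪ A) ?_ ?_ ?_ ?_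
    · intro A hA B hB hAB
      rw [Finset.mem_coe, Finset.mem_powerset, Finset.subset_sdiff] at hA hB
      have := congrArg (fun X => X \ S) hAB
      simp only [Finset.union_sdiff_left] at this
      rwa [Finset.sdiff_eq_self_of_disjoint hA.2, Finset.sdiff_eq_self_of_disjoint hB.2] at this
    · intro A _; simp
    · intro A _ hA
      by_contra hne
      obtain ⟨h1, h2⟩ := mul_ne_zero_iff.1 hne
      have hSA : S ⊆ A := by
        by_contra hc
        exact h1 (by simp [NN, hc])
      have hAU : A ⊆ U := by
        by_contra hc
        exact h2 (by simp [NI, hc])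
      refine hA ⟨A \ S, ?_, ?_⟩
      · rw [Finset.mem_coe, Finset.mem_powerset]
        exact Finset.sdiff_subset_sdiff hAU subset_rfl
      · exact Finset.union_sdiff_of_subset hSA
    · intro A hA
      rw [Finset.mem_powerset, Finset.subset_sdiff] at hA
      rw [NN, NI, if_pos Finset.subset_union_left, if_pos (Finset.union_subset hSU hA.1),
        Finset.union_sdiff_left, Finset.sdiff_eq_self_of_disjoint hA.2, sdiff_sdiff]
      rfl
  · rw [if_neg (fun h : S = U => hSU (h ▸ subset_rfl))]
    apply Finset.sum_eq_zero
    intro A _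
    by_cases h1 : S ⊆ A
    · have h2 : ¬ A ⊆ U := fun h => hSU (h1.trans h)
      simp [NI, h2]
    · simp [NN, h1]

theorem NI_NN (m : ℕ) : NI m * NN m = 1 := mul_eq_one_comm.1 (NN_NI m)

noncomputable def uu (m : ℕ) : (Mat m ℤ)ˣ where
  val := NN m * JJ m ℤ
  inv := JJ m ℤ * NI m
  val_inv := by
    rw [mul_assoc, ← mul_assoc (JJ m ℤ), JJ_JJ, one_mul, NN_NI]
  inv_val := by
    rw [mul_assoc, ← mul_assoc (NI m), NI_NN, one_mul, JJ_JJ]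

theorem aa_eq (m n : ℕ) (S : Finset (Fin m)) : aa m n S = ((NN m * JJ m ℤ) ^ n) ∅ S := by
  induction n generalizing S with
  | zero =>
    rw [aa_zero, pow_zero, Matrix.one_apply]
    simp [eq_comm]
  | succ n ih =>
    rw [aa_succ, bb_eq, pow_succ, ← mul_assoc, mul_JJ, Matrix.mul_apply]
    simp only [← ih]
    rw [← Finset.sum_subset (Finset.subset_univ (Sᶜ).powerset)]
    · refine Finset.sum_congr rfl fun A hA => ?_
      rw [NN, if_pos (Finset.mem_powerset.1 hA)]
    · intro A _ hA
      rw [Finset.mem_powerset] at hA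
      rw [NN, if_neg hA, mul_zero]

theorem pathE_loop (m : ℕ) : ∀ e ∈ pathE m, ¬ e.IsDiag := by
  rintro e ⟨i, j, h, rfl⟩ hd
  rw [Sym2.mk_isDiag_iff] at hd
  subst hd
  omega

theorem NN_parity {m : ℕ} {S U : Finset (Fin m)} (h : NN m S U ≠ 0) :
    ∃ k, U.card = S.card + 2 * k := by
  unfold NN at h
  split_ifs at h with hs
  · obtain ⟨P, hP⟩ := MM_card_ne h
    refine ⟨P.card, ?_⟩
    rw [← card_Cov (pathE_loop m) hP, Finset.card_sdiff_of_subset hs]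
    have := Finset.card_le_card hs
    omega
  · exact absurd rfl h

/-! complexified -/
open Complex in
noncomputable def dd (m : ℕ) : Finset (Fin m) → ℂ := fun S => I ^ S.card
open Complex in
noncomputable def dd' (m : ℕ) : Finset (Fin m) → ℂ := fun S => (-I) ^ S.card
noncomputable def ee (m : ℕ) : Finset (Fin m) → ℂ := fun S => (-1) ^ S.card

noncomputable def NC (m : ℕ) : Mat m ℂ := (NN m).map (Int.castRingHom ℂ)

theorem I_negI : Complex.I * (-Complex.I) = 1 := by simp

theorem NI_map (m : ℕ) : (NI m).map (Int.castRingHom ℂ) =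
    Matrix.diagonal (dd' m) * NC m * Matrix.diagonal (dd m) := by
  ext S U
  rw [Matrix.mul_diagonal, Matrix.diagonal_mul]
  simp only [NC, Matrix.map_apply, NI, NN]
  split_ifs with hs
  · have : ∀ P ∈ MM (pathE m) (U \ S), (-1 : ℤ) ^ P.card = (-1) ^ ((U \ S).card / 2) := by
      intro P hP
      rw [card_Cov (pathE_loop m) (mem_MM.1 hP)]
      simp
    rw [Finset.sum_congr rfl this, Finset.sum_const]
    by_cases hc : ((MM (pathE m) (U \ S)).card : ℤ) = 0
    · have hc' : (MM (pathE m) (U \ S)).card = 0 := by exact_mod_cast hc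
      simp [hc']
    · obtain ⟨P, hP⟩ := MM_card_ne hc
      have h2 := card_Cov (pathE_loop m) hP
      have hU : U.card = S.card + 2 * P.card := by
        rw [← h2, Finset.card_sdiff_of_subset hs]
        have := Finset.card_le_card hs
        omega
      have : dd' m S * dd m U = (-1) ^ P.card := by
        rw [dd, dd', hU, pow_add, ← mul_assoc, ← mul_pow, mul_comm (-Complex.I), I_negI, one_pow,
          one_mul, pow_mul, Complex.I_sq]
      rw [mul_right_comm, this, h2]
      simp [mul_comm]
  · simp

theorem dd_dd' (m : ℕ) : Matrix.diagonal (dd m) * Matrix.diagonal (dd' m) = 1 := by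
  rw [Matrix.diagonal_mul_diagonal, ← Matrix.diagonal_one]
  congr 1
  ext S
  simp only [dd, dd']
  rw [← mul_pow, I_negI, one_pow]

theorem dd_dd (m : ℕ) : Matrix.diagonal (dd m) * Matrix.diagonal (dd m) =
    Matrix.diagonal (ee m) := by
  rw [Matrix.diagonal_mul_diagonal]
  congr 1
  ext S
  simp only [dd, ee]
  rw [← mul_pow, Complex.I_mul_I]

theorem J_dd' (m : ℕ) : JJ m ℂ * Matrix.diagonal (dd' m) =
    ((-Complex.I) ^ m) • (Matrix.diagonal (dd m) * JJ m ℂ) := by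
  ext S U
  rw [Matrix.mul_diagonal, Matrix.smul_apply, Matrix.diagonal_mul, JJ]
  split_ifs with h
  · subst h
    simp only [dd, dd', smul_eq_mul, one_mul, mul_one]
    have : ∀ z : ℂ, z ^ m = z ^ S.card * z ^ Sᶜ.card := by
      intro z
      rw [← pow_add, Finset.card_add_card_compl, Fintype.card_fin]
    rw [this, mul_right_comm, ← mul_pow, mul_comm (-Complex.I), I_negI, one_pow, one_mul]
  · simp

theorem ee_J (m : ℕ) : Matrix.diagonal (ee m) * JJ m ℂ =
    ((-1 : ℂ) ^ m) • (JJ m ℂ * Matrix.diagonal (ee m)) := by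
  ext S U
  rw [Matrix.smul_apply, Matrix.mul_diagonal, Matrix.diagonal_mul, JJ]
  split_ifs with h
  · subst h
    simp only [ee, smul_eq_mul, one_mul, mul_one]
    have : ∀ z : ℂ, z ^ m = z ^ S.card * z ^ Sᶜ.card := by
      intro z
      rw [← pow_add, Finset.card_add_card_compl, Fintype.card_fin]
    rw [this, mul_assoc, ← mul_pow]
    simp
  · simp

theorem ee_N (m : ℕ) : Matrix.diagonal (ee m) * NC m = NC m * Matrix.diagonal (ee m) := by
  ext S U
  rw [Matrix.mul_diagonal, Matrix.diagonal_mul]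
  by_cases h : NN m S U = 0
  · simp [NC, h]
  · obtain ⟨k, hk⟩ := NN_parity h
    simp only [ee]
    rw [hk, pow_add, pow_mul, mul_comm]
    simp

theorem ee_JN (m n : ℕ) : Matrix.diagonal (ee m) * (JJ m ℂ * NC m) ^ n =
    ((-1 : ℂ) ^ m) ^ n • ((JJ m ℂ * NC m) ^ n * Matrix.diagonal (ee m)) := by
  induction n with
  | zero => simp
  | succ n ih =>
    rw [pow_succ, ← mul_assoc, ih, smul_mul_assoc, mul_assoc _ (Matrix.diagonal (ee m)),
      ← mul_assoc (Matrix.diagonal (ee m)), ee_J, smul_mul_assoc, mul_assoc (JJ m ℂ), ee_N,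
      mul_smul_comm, smul_smul]
    simp only [mul_assoc, pow_succ]

theorem key_pow (m n : ℕ) : (JJ m ℂ * (NI m).map (Int.castRingHom ℂ)) ^ n =
    (((-Complex.I) ^ m) ^ n * ((-1 : ℂ) ^ m) ^ (∑ i ∈ Finset.range n, i)) •
    (Matrix.diagonal (dd m) * (JJ m ℂ * NC m) ^ n * Matrix.diagonal (ee m) ^ n *
      Matrix.diagonal (dd' m)) := by
  induction n with
  | zero => simp [-Matrix.diagonal_mul_diagonal, dd_dd']
  | succ n ih =>
    have h1 : JJ m ℂ * (NI m).map (Int.castRingHom ℂ) = ((-Complex.I) ^ m) •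
        (Matrix.diagonal (dd m) * (JJ m ℂ * NC m) * Matrix.diagonal (dd m)) := by
      rw [NI_map, ← mul_assoc, ← mul_assoc, J_dd', smul_mul_assoc, smul_mul_assoc]
      simp only [mul_assoc]
    have h2 : Matrix.diagonal (dd m) * (JJ m ℂ * NC m) * Matrix.diagonal (dd m) *
        (Matrix.diagonal (dd m) * (JJ m ℂ * NC m) ^ n * Matrix.diagonal (ee m) ^ n *
        Matrix.diagonal (dd' m)) = ((-1 : ℂ) ^ m) ^ n • (Matrix.diagonal (dd m) *
        (JJ m ℂ * NC m) ^ (n + 1) * Matrix.diagonal (ee m) ^ (n + 1) *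
      Matrix.diagonal (dd' m)) := by
      have : Matrix.diagonal (dd m) * (JJ m ℂ * NC m) * Matrix.diagonal (dd m) *
        (Matrix.diagonal (dd m) * (JJ m ℂ * NC m) ^ n * Matrix.diagonal (ee m) ^ n *
        Matrix.diagonal (dd' m)) = Matrix.diagonal (dd m) * (JJ m ℂ * NC m) *
        ((Matrix.diagonal (dd m) * Matrix.diagonal (dd m)) * (JJ m ℂ * NC m) ^ n) *
        Matrix.diagonal (ee m) ^ n * Matrix.diagonal (dd' m) := by
        simp only [mul_assoc]
      rw [this, dd_dd, ee_JN, pow_succ' (JJ m ℂ * NC m), pow_succ' (Matrix.diagonal (ee m))]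
      simp only [mul_smul_comm, smul_mul_assoc, mul_assoc]
    rw [pow_succ', ih, Finset.sum_range_succ, h1, smul_mul_smul_comm, h2, smul_smul]
    congr 1
    ring

theorem NN_univ (m : ℕ) (A : Finset (Fin m)) :
    NN m Finset.univ A = if A = Finset.univ then 1 else 0 := by
  unfold NN
  simp only [Finset.univ_subset_iff]
  split_ifs with h
  · subst h
    rw [sdiff_self, Finset.bot_eq_empty, MM_empty]; simp
  · rfl

theorem NN_emp (m : ℕ) (A : Finset (Fin m)) :
    NN m A ∅ = if A = ∅ then 1 else 0 := by
  unfold NN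
  simp only [Finset.subset_empty]
  split_ifs with h
  · subst h
    rw [sdiff_self, Finset.bot_eq_empty, MM_empty]; simp
  · rfl

theorem JN_entry (m k : ℕ) : ((JJ m ℤ * NN m) ^ (k + 2)) ∅ ∅ = ((NN m * JJ m ℤ) ^ k) ∅ ∅ := by
  have h : ∀ k, (JJ m ℤ * NN m) ^ (k + 1) = JJ m ℤ * (NN m * JJ m ℤ) ^ k * NN m := by
    intro k
    induction k with
    | zero => simp
    | succ k ih => rw [pow_succ, ih, pow_succ (NN m * JJ m ℤ)]; simp only [mul_assoc]
  rw [h, mul_assoc, JJ_mul, Matrix.mul_apply]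
  simp only [NN_emp, mul_ite, mul_one, mul_zero, Finset.sum_ite_eq', Finset.mem_univ, if_true,
    Finset.compl_empty, pow_succ']
  rw [Matrix.mul_apply]
  simp only [mul_JJ, NN_univ, Finset.compl_eq_univ_iff, ite_mul, one_mul, zero_mul]
  simp

noncomputable def tt (m : ℕ) (n : ℤ) : ℤ := ((uu m ^ n : (Mat m ℤ)ˣ) : Mat m ℤ) ∅ ∅

theorem tt_nat (m k : ℕ) : tt m k = ((NN m * JJ m ℤ) ^ k) ∅ ∅ := by
  unfold tt
  rw [zpow_natCast, Units.val_pow_eq_pow_val]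
  rfl

theorem tt_neg (m k : ℕ) : tt m (-(k : ℤ)) = ((JJ m ℤ * NI m) ^ k) ∅ ∅ := by
  unfold tt
  rw [zpow_neg, zpow_natCast, ← inv_pow, Units.val_pow_eq_pow_val]
  rfl

theorem JJ_map (m : ℕ) : (JJ m ℤ).map (Int.castRingHom ℂ) = JJ m ℂ := by
  ext S U
  simp only [Matrix.map_apply, JJ]
  split_ifs <;> simp

theorem map_entry {m : ℕ} (X : Mat m ℤ) (k : ℕ) :
    (((X ^ k) ∅ ∅ : ℤ) : ℂ) = ((X.map (Int.castRingHom ℂ)) ^ k) ∅ ∅ := by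
  have := map_pow (Int.castRingHom ℂ).mapMatrix X k
  rw [RingHom.mapMatrix_apply, RingHom.mapMatrix_apply] at this
  rw [← this]; rfl

theorem JNC_entry (m k : ℕ) : ((JJ m ℂ * NC m) ^ (k + 2)) ∅ ∅ = (tt m k : ℂ) := by
  rw [tt_nat, ← JN_entry, map_entry, Matrix.map_mul, JJ_map]; rfl

theorem tt_parity (m k : ℕ) : ((-1 : ℂ) ^ m) ^ k * (tt m k : ℂ) = tt m k := by
  have h := congrFun (congrFun (ee_JN m (k + 2)) ∅) ∅
  rw [Matrix.diagonal_mul, Matrix.smul_apply, Matrix.mul_diagonal, JNC_entry] at h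
  simp only [ee, Finset.card_empty, pow_zero, one_mul, mul_one, smul_eq_mul] at h
  have h2 : ((-1 : ℂ) ^ m) ^ 2 = 1 := by rw [← pow_mul, mul_comm, pow_mul]; simp
  rw [pow_add, h2, mul_one] at h
  exact h.symm

theorem tt_rec (m k : ℕ) : (tt m (-2 - (k : ℤ)) : ℂ) =
    ((-Complex.I) ^ m) ^ (k + 2) * ((-1 : ℂ) ^ m) ^ (∑ i ∈ Finset.range (k + 2), i) * tt m k := by
  have : (-2 - (k : ℤ)) = -((k + 2 : ℕ) : ℤ) := by push_cast; ring
  rw [this, tt_neg, map_entry, Matrix.map_mul, JJ_map, key_pow, Matrix.smul_apply,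
    Matrix.mul_diagonal, Matrix.diagonal_pow, Matrix.mul_diagonal, Matrix.diagonal_mul, JNC_entry]
  simp [dd, dd', ee]

theorem tri_pow (q : ℂ) (hq : q ^ 2 = 1) (l : ℕ) :
    q ^ (∑ i ∈ Finset.range (2 * l), i) = q ^ l := by
  induction l with
  | zero => simp
  | succ l ih =>
    rw [show 2 * (l + 1) = 2 * l + 1 + 1 by ring, Finset.sum_range_succ, Finset.sum_range_succ,
      pow_add, pow_add, ih, pow_succ q (2 * l), pow_mul, hq]
    simp [pow_succ]

theorem tt_nonneg (m k : ℕ) : tt m (-2 - (k : ℤ)) = eps m k * tt m k := by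
  have h := tt_rec m k
  set q : ℂ := (-1) ^ m with hq
  set c : ℂ := (-Complex.I) ^ m with hc
  have hq2 : q ^ 2 = 1 := by rw [hq, ← pow_mul, mul_comm, pow_mul]; simp
  have hcq : c ^ 2 = q := by rw [hc, ← pow_mul, mul_comm, pow_mul]; simp [hq]
  have hp := tt_parity m k
  rw [← hq] at hp
  have hC : (tt m (-2 - (k : ℤ)) : ℂ) = ((eps m k * tt m k : ℤ) : ℂ) := by
    rw [h]
    rcases Nat.even_or_odd' k with ⟨l, rfl | rfl⟩
    · have he : eps m ((2 * l : ℕ) : ℤ) = 1 := by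
        unfold eps
        rw [if_neg]
        rintro ⟨_, h⟩
        rw [Int.odd_iff] at h
        push_cast at h
        omega
      rw [he, show 2 * l + 2 = 2 * (l + 1) by ring, tri_pow q hq2, pow_mul, hcq, ← pow_add,
        ← two_mul, pow_mul, hq2]
      simp
    · rcases Nat.even_or_odd m with hm | hm
      · have hq1 : q = 1 := by rw [hq, hm.neg_one_pow]
        rw [hq1] at hcq ⊢
        have : c ^ (2 * l + 1 + 2) = c := by
          rw [show 2 * l + 1 + 2 = 2 * (l + 1) + 1 by ring, pow_succ, pow_mul, hcq]; simp
        rw [this, one_pow, mul_one, Int.cast_mul]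
        congr 1
        obtain ⟨r, rfl⟩ := hm
        have hcr : c = (-1) ^ r := by
          rw [hc, ← two_mul, pow_mul]; simp
        rw [hcr]
        have ho : Odd ((2 * l + 1 : ℕ) : ℤ) := ⟨l, by push_cast; ring⟩
        unfold eps
        rcases Nat.even_or_odd r with hr | hr
        · rw [hr.neg_one_pow, if_neg]
          · simp
          · rintro ⟨h, _⟩
            obtain ⟨s, rfl⟩ := hr
            omega
        · rw [hr.neg_one_pow, if_pos]
          · simp
          · refine ⟨?_, ho⟩
            obtain ⟨s, rfl⟩ := hr
            omega
      · have hq1 : q = -1 := by rw [hq, hm.neg_one_pow]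
        rw [hq1, Odd.neg_one_pow (⟨l, rfl⟩ : Odd (2 * l + 1))] at hp
        have h0 : (tt m ((2 * l + 1 : ℕ) : ℤ) : ℂ) = 0 := by linear_combination (-1 / 2) * hp
        rw [Int.cast_mul, h0]; simp
  exact_mod_cast hC

theorem tt_neg_one (m : ℕ) (hm : 1 ≤ m) : tt m (-1) = 0 := by
  have := tt_neg m 1
  rw [Nat.cast_one] at this
  rw [this, pow_one, JJ_mul, NI, if_neg]
  rw [Finset.compl_empty, Finset.subset_empty]
  intro h
  have : (⟨0, hm⟩ : Fin m) ∈ (∅ : Finset (Fin m)) := h ▸ Finset.mem_univ _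
  simp at this

theorem tt_recurrence (m : ℕ) (n : ℤ) :
    ∑ j ∈ Finset.range ((uu m : Mat m ℤ).charpoly.natDegree + 1),
      (uu m : Mat m ℤ).charpoly.coeff j * tt m (n + j) = 0 := by
  have h := Matrix.aeval_self_charpoly (uu m : Mat m ℤ)
  rw [Polynomial.aeval_eq_sum_range] at h
  have h2 := congrArg (fun X => ((uu m ^ n : (Mat m ℤ)ˣ) : Mat m ℤ) * X) h
  simp only [Finset.mul_sum, mul_zero] at h2
  have h3 := congrFun (congrFun h2 ∅) ∅
  rw [Matrix.sum_apply] at h3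
  rw [Matrix.zero_apply] at h3
  rw [← h3]
  refine Finset.sum_congr rfl fun j _ => ?_
  rw [mul_smul_comm, Matrix.smul_apply, smul_eq_mul, tt, zpow_add, zpow_natCast, Units.val_mul,
    Units.val_pow_eq_pow_val]

/-- The counts T(m,n), extrapolated to negative n by a linear recurrence,
satisfy the reciprocity relation T(m,−2−n) = ε_{m,n} T(m,n). -/
theorem reciprocity_for_domino_tilings (m : ℕ) (hm : 1 ≤ m) :
    ∃ (d : ℕ), 1 ≤ d ∧ ∃ (a : ℕ → ℤ), (∃ j ≤ d, a j ≠ 0) ∧ ∃ t : ℤ → ℤ,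
      (∀ n : ℤ, ∑ j ∈ Finset.range (d + 1), a j * t (n + j) = 0) ∧
      (∀ n : ℤ, 1 ≤ n → t n = T m n.toNat) ∧
      (∀ n : ℤ, t (-2 - n) = eps m n * t n) := by
  refine ⟨(uu m : Mat m ℤ).charpoly.natDegree, ?_, (uu m : Mat m ℤ).charpoly.coeff,
    ⟨_, le_rfl, ?_⟩, tt m, tt_recurrence m, ?_, ?_⟩
  · rw [Matrix.charpoly_natDegree_eq_dim]
    exact Fintype.card_pos
  · have := (Matrix.charpoly_monic (uu m : Mat m ℤ)).coeff_natDegree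
    rw [this]
    exact one_ne_zero
  · intro n hn
    rw [T_eq, aa_eq, ← tt_nat, Int.toNat_of_nonneg (by omega)]
  · intro n
    rcases lt_trichotomy n (-1) with h | rfl | h
    · obtain ⟨k, hk⟩ := Int.eq_ofNat_of_zero_le (show 0 ≤ -2 - n by omega)
      have hn : n = -2 - (k : ℤ) := by omega
      have he : eps m n = eps m k := by
        unfold eps
        have : Odd n ↔ Odd (k : ℤ) := by
          rw [Int.odd_iff, Int.odd_iff]; omega
        simp only [this]
      have he2 : eps m k * eps m k = 1 := by
        unfold eps
        split_ifs <;> rfl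
      rw [he, hk]
      conv_rhs => rw [hn, tt_nonneg, ← mul_assoc, he2, one_mul]
    · rw [show (-2 - -1 : ℤ) = -1 by ring, tt_neg_one m hm]; simp
    · obtain ⟨k, rfl⟩ := Int.eq_ofNat_of_zero_le (show 0 ≤ n by omega)
      exact tt_nonneg m k
end

section
/- Suppose t₁, t₂ : ℤ → ℤ each satisfy some nontrivial constant-coefficient linear recurrence valid at every n ∈ ℤ; that is, there exist integers a_0, …, a_d, not all zero, with ∑_{j=0}^{d} a_j t₁(n+j) = 0 for all n ∈ ℤ, and integers b_0, …, b_e, not all zero, with ∑_{j=0}^{e} b_j t₂(n+j) = 0 for all n ∈ ℤ. If t₁(n) = t₂(n) for all n ≥ 1, then t₁ = t₂. (The extrapolation of a sequence to negative indices via a linear recurrence does not depend on which recurrence is used.) -/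
open Finset

theorem ext_aux (u : ℤ → ℤ) (d : ℕ) (a : ℕ → ℤ) (ha : ∃ j ≤ d, a j ≠ 0)
    (h : ∀ n : ℤ, ∑ j ∈ Finset.range (d + 1), a j * u (n + j) = 0)
    (hu : ∀ n : ℤ, 1 ≤ n → u n = 0) : ∀ n, u n = 0 := by
  classical
  obtain ⟨hk, hak⟩ := Nat.find_spec ha
  have hmin : ∀ j < Nat.find ha, a j = 0 := by
    intro j hj
    by_contra hne
    exact Nat.find_min ha hj ⟨by omega, hne⟩
  generalize Nat.find ha = k at *
  have key : ∀ m : ℕ, ∀ n : ℤ, 1 - (m : ℤ) ≤ n → u n = 0 := by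
    intro m
    induction m with
    | zero => intro n hn; exact hu n (by simpa using hn)
    | succ m ih =>
      intro n hn
      push_cast at hn
      have h0 := h (n - k)
      rw [Finset.sum_eq_single k] at h0
      · simpa [hak] using h0
      · intro j _ hjk
        rcases lt_or_gt_of_ne hjk with hlt | hgt
        · rw [hmin j hlt, zero_mul]
        · rw [ih _ (by omega), mul_zero]
      · intro hc
        exact absurd (Finset.mem_range.2 (by omega)) hc
  intro n
  exact key (1 - n).toNat n (by omega)

/-- The extrapolation of a sequence to negative indices via a constant-coefficient
linear recurrence does not depend on which recurrence is used. -/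
theorem extrapolation_unique
    (t₁ t₂ : ℤ → ℤ) (d e : ℕ) (a b : ℕ → ℤ)
    (ha : ∃ j ≤ d, a j ≠ 0) (hb : ∃ j ≤ e, b j ≠ 0)
    (h₁ : ∀ n : ℤ, ∑ j ∈ Finset.range (d + 1), a j * t₁ (n + j) = 0)
    (h₂ : ∀ n : ℤ, ∑ j ∈ Finset.range (e + 1), b j * t₂ (n + j) = 0)
    (heq : ∀ n : ℤ, 1 ≤ n → t₁ n = t₂ n) :
    t₁ = t₂ := by
  have hv : ∀ n : ℤ, ∑ j ∈ Finset.range (d + 1), a j * (t₁ (n + j) - t₂ (n + j)) = 0 := by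
    refine ext_aux (fun n => ∑ j ∈ Finset.range (d + 1), a j * (t₁ (n + j) - t₂ (n + j))) e b hb
      ?_ ?_
    · intro n
      have h3 : ∀ m : ℤ, ∑ j ∈ Finset.range (d + 1), a j * (t₁ (m + j) - t₂ (m + j))
          = - ∑ j ∈ Finset.range (d + 1), a j * t₂ (m + j) := by
        intro m
        simp only [mul_sub, Finset.sum_sub_distrib, h₁ m, zero_sub]
      simp only [h3, mul_neg, Finset.sum_neg_distrib, neg_eq_zero, Finset.mul_sum]
      rw [Finset.sum_comm]
      refine Finset.sum_eq_zero fun j _ => ?_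
      have h4 := congrArg (fun x => a j * x) (h₂ (n + j))
      simp only [Finset.mul_sum, mul_zero] at h4
      rw [← h4]
      refine Finset.sum_congr rfl fun i _ => ?_
      rw [add_right_comm n (j : ℤ) i]
      ring
    · intro n hn
      refine Finset.sum_eq_zero fun j _ => ?_
      rw [heq _ (by omega), sub_self, mul_zero]
  funext n
  exact sub_eq_zero.1 (ext_aux (fun n => t₁ n - t₂ n) d a ha hv
    (fun n hn => sub_eq_zero.2 (heq n hn)) n)
end

section
/- For every positive integer m there exist integers c_0, …, c_{2^m − 1} such that T(m, n + 2^m) = ∑_{j=0}^{2^m − 1} c_j · T(m, n + j) for every n ≥ 1. (For fixed m, the domino-tiling counts of m-by-n rectangles satisfy a linear recurrence of order at most 2^m.) -/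
open Finset

namespace TilingRec

open scoped Classical in
/-- Generic correspondence: perfect matchings are direction fields. -/
theorem pm_count {V D : Type} [Fintype V] [Fintype D] (G : SimpleGraph V)
    (R : D → V → V → Prop) (opp : D → D)
    (hadj : ∀ p q, G.Adj p q ↔ ∃ d, R d p q)
    (hd : ∀ d d' p q, R d p q → R d' p q → d = d')
    (hq : ∀ d p q q', R d p q → R d p q' → q = q')
    (hopp : ∀ d p q, R d p q → R (opp d) q p) :
    {P : Finset (Sym2 V) | IsPM G P}.ncard
      = {f : V → D | ∀ p, ∃ q, R (f p) p q ∧ f q = opp (f p)}.ncard := by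
  symm
  refine Set.ncard_congr
    (fun f _ => (Finset.univ.filter fun e => ∃ p q, e = s(p, q) ∧ R (f p) p q)) ?_ ?_ ?_
  · intro f hf
    refine ⟨?_, ?_⟩
    · intro e he
      simp only [mem_filter, mem_univ, true_and] at he
      obtain ⟨p, q, rfl, h⟩ := he
      exact (hadj p q).2 ⟨_, h⟩
    · intro v
      obtain ⟨q, h1, h2⟩ := hf v
      refine ⟨s(v, q), ⟨?_, by simp⟩, ?_⟩
      · simp only [mem_filter, mem_univ, true_and]
        exact ⟨v, q, rfl, h1⟩
      · rintro e ⟨he, hv⟩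
        simp only [mem_filter, mem_univ, true_and] at he
        obtain ⟨a, b, rfl, h⟩ := he
        rcases Sym2.mem_iff.1 hv with rfl | rfl
        · rw [hq _ _ _ _ h h1]
        · obtain ⟨c, h3, h4⟩ := hf a
          obtain rfl := hq _ _ _ _ h h3
          have h5 := hopp _ _ _ h
          rw [← h4] at h5
          rw [hq _ _ _ _ h5 h1, Sym2.eq_swap]
  · intro f g hf hg h
    funext v
    obtain ⟨q, h1, h2⟩ := hf v
    have : s(v, q) ∈ (Finset.univ.filter fun e => ∃ p q, e = s(p, q) ∧ R (g p) p q) := by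
      rw [← h]
      simp only [mem_filter, mem_univ, true_and]
      exact ⟨v, q, rfl, h1⟩
    simp only [mem_filter, mem_univ, true_and] at this
    obtain ⟨a, b, hab, h3⟩ := this
    rcases Sym2.eq_iff.1 hab with ⟨rfl, rfl⟩ | ⟨rfl, rfl⟩
    · exact hd _ _ _ _ h1 h3
    · obtain ⟨c, h4, h5⟩ := hg q
      obtain rfl := hq _ _ _ _ h3 h4
      rw [h5]
      exact hd _ _ _ _ h1 (hopp _ _ _ h3)
  · rintro P ⟨hP, hu⟩
    have key : ∀ v, ∃ d, ∃ q, R d v q ∧ s(v, q) ∈ P := by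
      intro v
      obtain ⟨e, ⟨he, hv⟩, -⟩ := hu v
      obtain ⟨q, rfl⟩ := Sym2.mem_iff_exists.1 hv
      obtain ⟨d, h⟩ := (hadj v q).1 (hP _ he)
      exact ⟨d, q, h, he⟩
    choose f g h1 h2 using key
    have huniq : ∀ v q, s(v, q) ∈ P → q = g v := by
      intro v q h
      have := (hu v).unique ⟨h, by simp⟩ ⟨h2 v, by simp⟩
      exact Sym2.congr_right.1 this
    refine ⟨f, ?_, ?_⟩
    · intro p
      refine ⟨g p, h1 p, ?_⟩
      have h3 : p = g (g p) := huniq _ _ (by rw [Sym2.eq_swap]; exact h2 p)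
      have h4 := h1 (g p)
      rw [← h3] at h4
      exact hd _ _ _ _ h4 (hopp _ _ _ (h1 p))
    · ext e
      simp only [mem_filter, mem_univ, true_and]
      constructor
      · rintro ⟨p, q, rfl, h⟩
        rw [hq _ _ _ _ h (h1 p)]
        exact h2 p
      · induction e with
        | _ p q =>
          intro h
          refine ⟨p, q, rfl, ?_⟩
          rw [huniq _ _ h]
          exact h1 p

/-- base step relation; `true` is horizontal. -/
def Q {m n : ℕ} (a : Bool) (p q : Fin m × Fin n) : Prop :=
  if a then p.1 = q.1 ∧ (p.2 : ℕ) + 1 = q.2 else p.2 = q.2 ∧ (p.1 : ℕ) + 1 = q.1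

/-- directed neighbour relation. -/
def R {m n : ℕ} (d : Bool × Bool) (p q : Fin m × Fin n) : Prop :=
  if d.2 then Q d.1 p q else Q d.1 q p

/-- opposite direction. -/
def opp (d : Bool × Bool) : Bool × Bool := (d.1, !d.2)

theorem T_eq (m n : ℕ) : T m n =
    {f : Fin m × Fin n → Bool × Bool | ∀ p, ∃ q, R (f p) p q ∧ f q = opp (f p)}.ncard := by
  unfold T
  apply pm_count
  · intro p q
    simp only [grid, SimpleGraph.fromRel_adj, Prod.exists, Bool.exists_bool, R, Q]
    obtain ⟨a, b⟩ := p
    obtain ⟨c, d⟩ := q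
    simp only [ne_eq, Prod.mk.injEq, Fin.ext_iff]
    simp
    omega
  · rintro ⟨_ | _, _ | _⟩ ⟨_ | _, _ | _⟩ ⟨a, b⟩ ⟨c, d⟩ <;>
      simp [R, Q, Fin.ext_iff] <;> omega
  · rintro ⟨_ | _, _ | _⟩ ⟨a, b⟩ ⟨c, d⟩ ⟨c', d'⟩ <;>
      simp [R, Q, Fin.ext_iff] <;> omega
  · rintro ⟨_ | _, _ | _⟩ ⟨a, b⟩ ⟨c, d⟩ <;>
      simp [R, Q, opp, Fin.ext_iff]

/-- vertical consistency of a column. -/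
def colOK {m : ℕ} (c : Fin m → Bool × Bool) : Prop :=
  ∀ i, (c i = (false, true) → ∃ i' : Fin m, (i : ℕ) + 1 = i' ∧ c i' = (false, false)) ∧
    (c i = (false, false) → ∃ i' : Fin m, (i' : ℕ) + 1 = i ∧ c i' = (false, true))

/-- rows joined to the left. -/
def lset {m : ℕ} (c : Fin m → Bool × Bool) : Finset (Fin m) :=
  Finset.univ.filter fun i => c i = (true, false)

/-- rows joined to the right. -/
def rset {m : ℕ} (c : Fin m → Bool × Bool) : Finset (Fin m) :=
  Finset.univ.filter fun i => c i = (true, true)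

/-- the sequence of states. -/
def st {m n : ℕ} (S : Finset (Fin m)) (g : Fin n → Fin m → Bool × Bool) :
    Fin (n + 1) → Finset (Fin m) :=
  Fin.cons S (fun j => rset (g j))

/-- good sequences of columns with initial state `S`. -/
def Good {m n : ℕ} (S : Finset (Fin m)) (g : Fin n → Fin m → Bool × Bool) : Prop :=
  (∀ j, colOK (g j) ∧ lset (g j) = st S g j.castSucc) ∧ st S g (Fin.last n) = ∅

theorem good_succ {m n : ℕ} (S : Finset (Fin m)) (c : Fin m → Bool × Bool)
    (g : Fin n → Fin m → Bool × Bool) :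
    Good S (Fin.cons c g : Fin (n + 1) → Fin m → Bool × Bool) ↔
      (colOK c ∧ lset c = S) ∧ Good (rset c) g := by
  have h : st S (Fin.cons c g : Fin (n + 1) → Fin m → Bool × Bool)
      = Fin.cons S (st (rset c) g) := by
    unfold st
    congr 1
    funext j
    refine Fin.cases ?_ (fun j => ?_) j <;> simp
  unfold Good
  rw [h, Fin.forall_fin_succ, ← Fin.succ_last]
  simp [and_assoc, ← Fin.succ_castSucc]

theorem good_iff {m n : ℕ} (g : Fin n → Fin m → Bool × Bool) :
    Good ∅ g ↔ ∀ p : Fin m × Fin n, ∃ q : Fin m × Fin n,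
      R (g p.2 p.1) p q ∧ g q.2 q.1 = opp (g p.2 p.1) := by
  constructor
  · rintro ⟨h1, h2⟩ ⟨i, j⟩
    obtain ⟨hc, hl⟩ := h1 j
    obtain ⟨hu, hdn⟩ := hc i
    rcases hg : g j i with ⟨_ | _, _ | _⟩
    · obtain ⟨i', h, h'⟩ := hdn hg
      exact ⟨(i', j), by simp [R, Q, h], by simp [h', opp]⟩
    · obtain ⟨i', h, h'⟩ := hu hg
      exact ⟨(i', j), by simp [R, Q, h], by simp [h', opp]⟩
    · have : i ∈ lset (g j) := by simp [lset, hg]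
      rw [hl] at this
      cases n with
      | zero => exact j.elim0
      | succ n =>
      revert hg this
      clear hl
      refine Fin.cases ?_ (fun k => ?_) j
      · simp [st]
      · intro hg this
        rw [← Fin.succ_castSucc] at this
        simp only [st, Fin.cons_succ, rset, mem_filter, mem_univ, true_and] at this
        exact ⟨(i, k.castSucc), by simp [R, Q], by simp [this, opp]⟩
    · have hr : i ∈ rset (g j) := by simp [rset, hg]
      by_cases hj : (j : ℕ) + 1 < n
      · have := (h1 ⟨j + 1, hj⟩).2
        have e : (⟨j + 1, hj⟩ : Fin n).castSucc = j.succ := rfl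
        rw [e] at this
        simp only [st, Fin.cons_succ] at this
        rw [← this] at hr
        simp only [lset, mem_filter, mem_univ, true_and] at hr
        exact ⟨(i, ⟨j + 1, hj⟩), by simp [R, Q], by simp [hr, opp]⟩
      · have e : Fin.last n = j.succ := by
          ext; simp; omega
        rw [e] at h2
        simp only [st, Fin.cons_succ] at h2
        rw [h2] at hr
        simp at hr
  · intro h
    refine ⟨fun j => ⟨fun i => ⟨fun hg => ?_, fun hg => ?_⟩, ?_⟩, ?_⟩
    · obtain ⟨⟨a, b⟩, h1, h2⟩ := h (i, j)
      simp [hg, R, Q, opp] at h1 h2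
      obtain ⟨rfl, h1⟩ := h1
      exact ⟨a, h1, h2⟩
    · obtain ⟨⟨a, b⟩, h1, h2⟩ := h (i, j)
      simp [hg, R, Q, opp] at h1 h2
      obtain ⟨rfl, h1⟩ := h1
      exact ⟨a, h1, h2⟩
    · cases n with
      | zero => exact j.elim0
      | succ n =>
      refine Fin.cases ?_ (fun k => ?_) j
      · ext i
        simp only [lset, st, mem_filter, mem_univ, true_and, Fin.castSucc_zero, Fin.cons_zero,
          Finset.notMem_empty, iff_false]
        intro hg
        obtain ⟨⟨a, b⟩, h1, h2⟩ := h (i, 0)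
        simp [hg, R, Q] at h1
      · rw [← Fin.succ_castSucc]
        ext i
        simp only [lset, rset, st, mem_filter, mem_univ, true_and, Fin.cons_succ]
        constructor
        · intro hg
          obtain ⟨⟨a, b⟩, h1, h2⟩ := h (i, k.succ)
          simp [hg, R, Q, opp] at h1 h2
          obtain ⟨rfl, h1⟩ := h1
          have : b = k.castSucc := by ext; simpa using h1
          rw [← this]; exact h2
        · intro hg
          obtain ⟨⟨a, b⟩, h1, h2⟩ := h (i, k.castSucc)
          simp [hg, R, Q, opp] at h1 h2
          obtain ⟨rfl, h1⟩ := h1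
          have : b = k.succ := by ext; simpa using h1.symm
          rw [← this]; exact h2
    · cases n with
      | zero => rfl
      | succ n =>
        rw [← Fin.succ_last]
        ext i
        simp only [rset, st, mem_filter, mem_univ, true_and, Fin.cons_succ,
          Finset.notMem_empty, iff_false]
        intro hg
        obtain ⟨⟨a, b⟩, h1, h2⟩ := h (i, Fin.last n)
        simp [hg, R, Q] at h1
        omega

open scoped Classical in
/-- number of good sequences. -/
noncomputable def N (m n : ℕ) (S : Finset (Fin m)) : ℤ :=
  ∑ g : Fin n → Fin m → Bool × Bool, if Good S g then 1 else 0

open scoped Classical in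
/-- transfer matrix. -/
noncomputable def A (m : ℕ) : Matrix (Finset (Fin m)) (Finset (Fin m)) ℤ :=
  fun S S' => ∑ c : Fin m → Bool × Bool,
    if (colOK c ∧ lset c = S) ∧ rset c = S' then 1 else 0

theorem T_eq_N (m n : ℕ) : (T m n : ℤ) = N m n ∅ := by
  classical
  rw [T_eq, N, Finset.sum_boole, Nat.cast_inj, ← Set.ncard_coe_finset]
  refine Set.ncard_congr (fun f _ => fun j i => f (i, j)) ?_ ?_ ?_
  · intro f hf
    simp only [coe_filter, mem_univ, true_and, Set.mem_setOf_eq]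
    rw [good_iff]
    exact hf
  · intro f g _ _ h
    funext ⟨i, j⟩
    exact congrFun (congrFun h j) i
  · intro g hg
    simp only [coe_filter, mem_univ, true_and, Set.mem_setOf_eq] at hg
    rw [good_iff] at hg
    exact ⟨fun p => g p.2 p.1, hg, rfl⟩

theorem N_succ (m n : ℕ) : N m (n + 1) = (A m).mulVec (N m n) := by
  classical
  funext S
  simp only [Matrix.mulVec, dotProduct, A, Finset.sum_mul]
  rw [Finset.sum_comm]
  unfold N
  rw [← (Fin.consEquiv (fun _ : Fin (n + 1) => Fin m → Bool × Bool)).sum_comp,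
    Fintype.sum_prod_type]
  refine Finset.sum_congr rfl fun c _ => ?_
  rw [Finset.sum_eq_single (rset c)]
  · simp only [and_true, Finset.mul_sum]
    refine Finset.sum_congr rfl fun g _ => ?_
    have := good_succ S c g
    change (if Good S (Fin.cons c g : Fin (n + 1) → Fin m → Bool × Bool) then (1 : ℤ) else 0) = _
    by_cases h1 : colOK c ∧ lset c = S <;> by_cases h2 : Good (rset c) g <;>
      simp [this, h1, h2]
  · intro S' _ h
    rw [if_neg (fun h' => h h'.2.symm), zero_mul]
  · simp

theorem N_add (m n j : ℕ) : N m (n + j) = (A m ^ j).mulVec (N m n) := by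
  induction j with
  | zero => simp
  | succ j ih => rw [← add_assoc, N_succ, ih, Matrix.mulVec_mulVec, pow_succ']

end TilingRec

/-- For fixed m, the domino-tiling counts of m-by-n rectangles satisfy a linear
recurrence of order at most 2^m. -/
theorem tiling_counts_satisfy_recurrence (m : ℕ) (hm : 1 ≤ m) :
    ∃ c : ℕ → ℤ, ∀ n : ℕ, 1 ≤ n →
      (T m (n + 2 ^ m) : ℤ) = ∑ j ∈ Finset.range (2 ^ m), c j * (T m (n + j) : ℤ) := by
  classical
  refine ⟨fun j => - (TilingRec.A m).charpoly.coeff j, fun n _ => ?_⟩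
  have hdeg : (TilingRec.A m).charpoly.natDegree = 2 ^ m := by
    rw [Matrix.charpoly_natDegree_eq_dim]; simp
  have hmon := (TilingRec.A m).charpoly_monic
  have h := Matrix.aeval_self_charpoly (TilingRec.A m)
  rw [Polynomial.aeval_eq_sum_range, hdeg, Finset.sum_range_succ] at h
  have hlead : (TilingRec.A m).charpoly.coeff (2 ^ m) = 1 := by
    rw [← hdeg]; exact hmon
  rw [hlead, one_smul] at h
  have h2 := congrFun (congrArg (fun M => Matrix.mulVec M (TilingRec.N m n)) h) ∅
  simp only [Matrix.add_mulVec, Matrix.sum_mulVec, Matrix.smul_mulVec, Matrix.zero_mulVec,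
    Pi.add_apply, Finset.sum_apply, Pi.smul_apply, Pi.zero_apply, smul_eq_mul,
    ← TilingRec.N_add, ← TilingRec.T_eq_N] at h2
  simp only [neg_mul, Finset.sum_neg_distrib]
  linarith
end

section
/- For every positive integer m there exist a 2^m × 2^m matrix M with non-negative integer entries and vectors u, w ∈ ℕ^{2^m} such that T(m,n) = uᵀ M^{n−1} w for every n ≥ 1. (The transfer-matrix representation of the domino-tiling counts of m-by-n rectangles.) -/
open Finset

set_option linter.unusedSimpArgs false

namespace TM

def E1 (a b c d : Prop) : Prop :=
  (a ∧ ¬ b ∧ ¬ c ∧ ¬ d) ∨ (¬ a ∧ b ∧ ¬ c ∧ ¬ d) ∨ (¬ a ∧ ¬ b ∧ c ∧ ¬ d) ∨ (¬ a ∧ ¬ b ∧ ¬ c ∧ d)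

def valid {m : ℕ} (S V H : Finset (Fin m)) : Prop :=
  (∀ i ∈ V, (i : ℕ) + 1 < m) ∧
  ∀ i, E1 (i ∈ S) (i ∈ H) (i ∈ V) (∃ i' ∈ V, (i' : ℕ) + 1 = i)

abbrev Cf (m n : ℕ) := Fin n → Finset (Fin m) × Finset (Fin m)

def good {m : ℕ} : (n : ℕ) → Finset (Fin m) → Cf m n → Prop
  | 0, S, _ => S = ∅
  | n + 1, S, f => valid S (f 0).1 (f 0).2 ∧ good n (f 0).2 (Fin.tail f)

def pre {m n : ℕ} (f : Cf m n) : Prop :=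
  (∀ j, ∀ i ∈ (f j).1, (i : ℕ) + 1 < m) ∧ (∀ j, ∀ i ∈ (f j).2, (j : ℕ) + 1 < n)

lemma good_iff {m : ℕ} (n : ℕ) (S : Finset (Fin m)) (f : Cf m n) :
    good n S f ↔ (n = 0 → S = ∅) ∧ pre f ∧ ∀ (i : Fin m) (j : Fin n),
      E1 (((j : ℕ) = 0 ∧ i ∈ S) ∨ ∃ j' : Fin n, (j' : ℕ) + 1 = j ∧ i ∈ (f j').2) (i ∈ (f j).2)
        (i ∈ (f j).1) (∃ i' ∈ (f j).1, (i' : ℕ) + 1 = i) := by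
  induction n generalizing S with
  | zero => simp [good, pre]
  | succ n ih =>
    rw [good, ih]
    simp only [pre, valid, Fin.forall_fin_succ (n := n), Fin.exists_fin_succ (n := n), Fin.tail]
    have e : (n = 0 → (f 0).2 = ∅) ↔ ∀ i ∈ (f 0).2, ((0 : Fin (n+1)) : ℕ) + 1 < n + 1 := by
      rw [Finset.eq_empty_iff_forall_notMem]
      constructor
      · intro h i hi
        rcases Nat.eq_zero_or_pos n with h0 | h0
        · exact absurd hi (h h0 i)
        · simpa using h0
      · intro h h0 i hi
        have := h i hi
        simp at this; omega
    rw [e]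
    simp only [Fin.val_succ, Fin.val_zero, Nat.add_right_cancel_iff, add_lt_add_iff_right, Nat.add_eq_zero_iff,
      Nat.succ_ne_zero, false_and, false_or, true_and, and_false, exists_false, or_false, forall_and,
      one_ne_zero, IsEmpty.forall_iff]
    have e2 : ∀ j : Fin n, (0 = (j : ℕ)) ↔ ((j : ℕ) = 0) := fun j => eq_comm
    simp only [e2]
    tauto

noncomputable section
open Classical

def cnt {m : ℕ} (n : ℕ) (S : Finset (Fin m)) : ℕ := ∑ f : Cf m n, if good n S f then 1 else 0

lemma cnt_succ {m : ℕ} (n : ℕ) (S : Finset (Fin m)) :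
    cnt (n+1) S = ∑ H, (∑ V, if valid S V H then 1 else 0) * cnt n H := by
  unfold cnt
  rw [← Fintype.sum_equiv (Fin.consEquiv (fun _ : Fin (n+1) => Finset (Fin m) × Finset (Fin m)))
    (fun p => if valid S p.1.1 p.1.2 ∧ good n p.1.2 p.2 then 1 else 0) _ (by
      intro p
      simp [good, Fin.consEquiv])]
  rw [Fintype.sum_prod_type, Fintype.sum_prod_type_right]
  refine Finset.sum_congr rfl fun H _ => ?_
  rw [Finset.sum_mul]
  refine Finset.sum_congr rfl fun V _ => ?_
  by_cases h : valid S V H <;> simp [h]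

def F {m n : ℕ} (P : Finset (Sym2 (Fin m × Fin n))) : Cf m n := fun j =>
  (Finset.univ.filter fun i => ∃ i' : Fin m, (i : ℕ) + 1 = i' ∧ s((i, j), (i', j)) ∈ P,
   Finset.univ.filter fun i => ∃ j' : Fin n, (j : ℕ) + 1 = j' ∧ s((i, j), (i, j')) ∈ P)

def G {m n : ℕ} (f : Cf m n) : Finset (Sym2 (Fin m × Fin n)) :=
  Finset.univ.filter fun e =>
    (∃ (i i' : Fin m) (j : Fin n), (i : ℕ) + 1 = i' ∧ i ∈ (f j).1 ∧ e = s((i, j), (i', j))) ∨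
    (∃ (i : Fin m) (j j' : Fin n), (j : ℕ) + 1 = j' ∧ i ∈ (f j).2 ∧ e = s((i, j), (i, j')))

lemma edge_iff {m n : ℕ} (e : Sym2 (Fin m × Fin n)) : e ∈ (grid m n).edgeSet ↔
    (∃ (i i' : Fin m) (j : Fin n), (i : ℕ) + 1 = i' ∧ e = s((i, j), (i', j))) ∨
    (∃ (i : Fin m) (j j' : Fin n), (j : ℕ) + 1 = j' ∧ e = s((i, j), (i, j'))) := by
  induction e with
  | _ p q =>
    obtain ⟨a, b⟩ := p
    obtain ⟨c, d⟩ := q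
    simp only [SimpleGraph.mem_edgeSet, grid, SimpleGraph.fromRel_adj, Sym2.eq_iff, Prod.mk.injEq]
    constructor
    · rintro ⟨-, (⟨rfl, h⟩ | ⟨rfl, h⟩) | (⟨rfl, h⟩ | ⟨rfl, h⟩)⟩
      · exact Or.inr ⟨a, _, _, h, by simp⟩
      · exact Or.inl ⟨_, _, b, h, by simp⟩
      · exact Or.inr ⟨c, _, _, h, by simp⟩
      · exact Or.inl ⟨_, _, d, h, by simp⟩
    · rintro (⟨i, i', j, h, (⟨⟨rfl, rfl⟩, rfl, rfl⟩ | ⟨⟨rfl, rfl⟩, rfl, rfl⟩)⟩ |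
        ⟨i, j, j', h, (⟨⟨rfl, rfl⟩, rfl, rfl⟩ | ⟨⟨rfl, rfl⟩, rfl, rfl⟩)⟩)
      all_goals
        refine ⟨?_, by simp [h]⟩
        rintro ⟨⟩
        try omega
      all_goals simp_all

lemma pre_F {m n : ℕ} (P : Finset (Sym2 (Fin m × Fin n))) : pre (F P) := by
  constructor
  · intro j i hi
    simp only [F, Finset.mem_filter] at hi
    obtain ⟨_, i', h, _⟩ := hi
    omega
  · intro j i hi
    simp only [F, Finset.mem_filter] at hi
    obtain ⟨_, i', h, _⟩ := hi
    omega

lemma G_sub {m n : ℕ} (f : Cf m n) : ∀ e ∈ G f, e ∈ (grid m n).edgeSet := by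
  intro e he
  rw [edge_iff]
  simp only [G, Finset.mem_filter] at he
  obtain ⟨_, ⟨i, i', j, h, _, h'⟩ | ⟨i, i', j, h, _, h'⟩⟩ := he
  · exact Or.inl ⟨_, _, _, h, h'⟩
  · exact Or.inr ⟨_, _, _, h, h'⟩

lemma G_v {m n : ℕ} (f : Cf m n) (i i' : Fin m) (j : Fin n) (h : (i : ℕ) + 1 = i') :
    s((i, j), (i', j)) ∈ G f ↔ i ∈ (f j).1 := by
  simp only [G, Finset.mem_filter, Finset.mem_univ, true_and, Sym2.eq_iff, Prod.mk.injEq]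
  constructor
  · rintro (⟨a, a', b, h1, h2, (⟨⟨rfl, rfl⟩, rfl, -⟩ | ⟨⟨rfl, rfl⟩, rfl, -⟩)⟩ |
      ⟨a, b, b', h1, h2, (⟨⟨rfl, rfl⟩, h3, h4⟩ | ⟨⟨rfl, rfl⟩, h3, h4⟩)⟩)
    · exact h2
    · omega
    · rw [h3] at h; omega
    · rw [h3] at h; omega
  · intro hi
    exact Or.inl ⟨i, i', j, h, hi, by simp⟩

lemma G_h {m n : ℕ} (f : Cf m n) (i : Fin m) (j j' : Fin n) (h : (j : ℕ) + 1 = j') :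
    s((i, j), (i, j')) ∈ G f ↔ i ∈ (f j).2 := by
  simp only [G, Finset.mem_filter, Finset.mem_univ, true_and, Sym2.eq_iff, Prod.mk.injEq]
  constructor
  · rintro (⟨a, a', b, h1, h2, (⟨⟨rfl, rfl⟩, h3, h4⟩ | ⟨⟨rfl, rfl⟩, h3, h4⟩)⟩ |
      ⟨a, b, b', h1, h2, (⟨⟨rfl, rfl⟩, -, rfl⟩ | ⟨⟨rfl, rfl⟩, -, rfl⟩)⟩)
    · rw [h4] at h; omega
    · rw [h4] at h; omega
    · exact h2
    · omega
  · intro hi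
    exact Or.inr ⟨i, j, j', h, hi, by simp⟩

lemma F_G {m n : ℕ} (f : Cf m n) (hf : pre f) : F (G f) = f := by
  funext j
  refine Prod.ext ?_ ?_
  · ext i
    simp only [F, Finset.mem_filter, Finset.mem_univ, true_and]
    constructor
    · rintro ⟨i', h, h'⟩
      exact (G_v f i i' j h).1 h'
    · intro hi
      exact ⟨⟨i + 1, hf.1 j i hi⟩, rfl, (G_v f i _ j rfl).2 hi⟩
  · ext i
    simp only [F, Finset.mem_filter, Finset.mem_univ, true_and]
    constructor
    · rintro ⟨i', h, h'⟩
      exact (G_h f i j i' h).1 h'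
    · intro hi
      exact ⟨⟨j + 1, hf.2 j i hi⟩, rfl, (G_h f i j _ rfl).2 hi⟩

lemma G_F {m n : ℕ} (P : Finset (Sym2 (Fin m × Fin n))) (hP : ∀ e ∈ P, e ∈ (grid m n).edgeSet) :
    G (F P) = P := by
  have key : ∀ e ∈ (grid m n).edgeSet, (e ∈ G (F P) ↔ e ∈ P) := by
    intro e he
    rw [edge_iff] at he
    obtain ⟨i, i', j, h, rfl⟩ | ⟨i, j, j', h, rfl⟩ := he
    · rw [G_v _ _ _ _ h]
      simp only [F, Finset.mem_filter, Finset.mem_univ, true_and]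
      constructor
      · rintro ⟨k, hk, h'⟩
        have : k = i' := Fin.ext (by omega)
        exact this ▸ h'
      · exact fun h' => ⟨_, h, h'⟩
    · rw [G_h _ _ _ _ h]
      simp only [F, Finset.mem_filter, Finset.mem_univ, true_and]
      constructor
      · rintro ⟨k, hk, h'⟩
        have : k = j' := Fin.ext (by omega)
        exact this ▸ h'
      · exact fun h' => ⟨_, h, h'⟩
  ext e
  exact ⟨fun h => (key e (G_sub _ e h)).1 h, fun h => (key e (hP e h)).2 h⟩

lemma uniq_iff {α : Type*} (Q a b c d : α → Prop) (hQ : ∀ e, Q e ↔ a e ∨ b e ∨ c e ∨ d e)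
    (ha : ∀ e e', a e → a e' → e = e') (hb : ∀ e e', b e → b e' → e = e')
    (hc : ∀ e e', c e → c e' → e = e') (hd : ∀ e e', d e → d e' → e = e')
    (hab : ∀ e, a e → ¬ b e) (hac : ∀ e, a e → ¬ c e) (had : ∀ e, a e → ¬ d e)
    (hbc : ∀ e, b e → ¬ c e) (hbd : ∀ e, b e → ¬ d e) (hcd : ∀ e, c e → ¬ d e) :
    (∃! e, Q e) ↔ E1 (∃ e, a e) (∃ e, b e) (∃ e, c e) (∃ e, d e) := by
  simp only [ExistsUnique, hQ, E1]
  constructor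
  · rintro ⟨e, h, hu⟩
    grind
  · rintro (⟨⟨e, h⟩, h1, h2, h3⟩ | ⟨h1, ⟨e, h⟩, h2, h3⟩ | ⟨h1, h2, ⟨e, h⟩, h3⟩ | ⟨h1, h2, h3, ⟨e, h⟩⟩) <;>
    refine ⟨e, ?_, ?_⟩ <;> grind

lemma loc {m n : ℕ} (P : Finset (Sym2 (Fin m × Fin n))) (hP : ∀ e ∈ P, e ∈ (grid m n).edgeSet)
    (i : Fin m) (j : Fin n) : (∃! e, e ∈ P ∧ (i, j) ∈ e) ↔
      E1 (((j : ℕ) = 0 ∧ i ∈ (∅ : Finset (Fin m))) ∨ ∃ j' : Fin n, (j' : ℕ) + 1 = j ∧ i ∈ (F P j').2)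
        (i ∈ (F P j).2)
        (i ∈ (F P j).1) (∃ i' ∈ (F P j).1, (i' : ℕ) + 1 = i) := by
  rw [uniq_iff (fun e => e ∈ P ∧ (i, j) ∈ e)
    (fun e => e ∈ P ∧ ∃ j' : Fin n, (j' : ℕ) + 1 = j ∧ e = s((i, j'), (i, j)))
    (fun e => e ∈ P ∧ ∃ j' : Fin n, (j : ℕ) + 1 = j' ∧ e = s((i, j), (i, j')))
    (fun e => e ∈ P ∧ ∃ i' : Fin m, (i : ℕ) + 1 = i' ∧ e = s((i, j), (i', j)))
    (fun e => e ∈ P ∧ ∃ i' : Fin m, (i' : ℕ) + 1 = i ∧ e = s((i', j), (i, j)))]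
  · have h1 : (∃ e, e ∈ P ∧ ∃ j' : Fin n, (j' : ℕ) + 1 = j ∧ e = s((i, j'), (i, j))) ↔
      (((j : ℕ) = 0 ∧ i ∈ (∅ : Finset (Fin m))) ∨ ∃ j' : Fin n, (j' : ℕ) + 1 = j ∧ i ∈ (F P j').2) := by
      simp only [F, Finset.mem_filter, Finset.mem_univ, true_and, Finset.notMem_empty, and_false, false_or]
      constructor
      · rintro ⟨e, he, j', h, rfl⟩
        exact ⟨j', h, j, h, he⟩
      · rintro ⟨j', h, k, hk, he⟩
        have : k = j := Fin.ext (by omega)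
        subst this
        exact ⟨_, he, j', h, rfl⟩
    have h2 : (∃ e, e ∈ P ∧ ∃ j' : Fin n, (j : ℕ) + 1 = j' ∧ e = s((i, j), (i, j'))) ↔
        i ∈ (F P j).2 := by
      simp only [F, Finset.mem_filter, Finset.mem_univ, true_and]
      constructor
      · rintro ⟨e, he, j', h, rfl⟩
        exact ⟨j', h, he⟩
      · rintro ⟨j', h, he⟩
        exact ⟨_, he, j', h, rfl⟩
    have h3 : (∃ e, e ∈ P ∧ ∃ i' : Fin m, (i : ℕ) + 1 = i' ∧ e = s((i, j), (i', j))) ↔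
        i ∈ (F P j).1 := by
      simp only [F, Finset.mem_filter, Finset.mem_univ, true_and]
      constructor
      · rintro ⟨e, he, j', h, rfl⟩
        exact ⟨j', h, he⟩
      · rintro ⟨j', h, he⟩
        exact ⟨_, he, j', h, rfl⟩
    have h4 : (∃ e, e ∈ P ∧ ∃ i' : Fin m, (i' : ℕ) + 1 = i ∧ e = s((i', j), (i, j))) ↔
        ∃ i' ∈ (F P j).1, (i' : ℕ) + 1 = i := by
      simp only [F, Finset.mem_filter, Finset.mem_univ, true_and]
      constructor
      · rintro ⟨e, he, j', h, rfl⟩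
        exact ⟨j', ⟨i, h, he⟩, h⟩
      · rintro ⟨j', ⟨k, hk, he⟩, h⟩
        have : k = i := Fin.ext (by omega)
        subst this
        exact ⟨_, he, j', h, rfl⟩
    rw [h1, h2, h3, h4]
  · intro e
    constructor
    · rintro ⟨he, hm⟩
      have := (edge_iff e).1 (hP e he)
      obtain ⟨a, a', b, h, rfl⟩ | ⟨a, b, b', h, rfl⟩ := this
      · rw [Sym2.mem_iff] at hm
        rcases hm with hm | hm <;> obtain ⟨rfl, rfl⟩ := Prod.mk.inj hm
        · exact Or.inr (Or.inr (Or.inl ⟨he, _, h, rfl⟩))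
        · exact Or.inr (Or.inr (Or.inr ⟨he, _, h, rfl⟩))
      · rw [Sym2.mem_iff] at hm
        rcases hm with hm | hm <;> obtain ⟨rfl, rfl⟩ := Prod.mk.inj hm
        · exact Or.inr (Or.inl ⟨he, _, h, rfl⟩)
        · exact Or.inl ⟨he, _, h, rfl⟩
    · rintro (⟨he, k, h, rfl⟩ | ⟨he, k, h, rfl⟩ | ⟨he, k, h, rfl⟩ | ⟨he, k, h, rfl⟩) <;>
        exact ⟨he, by simp⟩
  all_goals
    first
    | (rintro e e' ⟨-, k, h, rfl⟩ ⟨-, k', h', rfl⟩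
       have : k = k' := Fin.ext (by omega)
       rw [this])
    | (rintro e ⟨-, k, h, rfl⟩ ⟨-, k', h', h2⟩
       simp only [Sym2.eq_iff, Prod.mk.injEq, Fin.ext_iff] at h2
       omega)

lemma T_eq (m n : ℕ) (hn : 1 ≤ n) : T m n = cnt n (∅ : Finset (Fin m)) := by
  have h1 : cnt n (∅ : Finset (Fin m)) = {f : Cf m n | good n ∅ f}.ncard := by
    unfold cnt
    rw [Finset.sum_boole, ← Set.ncard_coe_finset]
    simp
  have key : ∀ P : Finset (Sym2 (Fin m × Fin n)), (∀ e ∈ P, e ∈ (grid m n).edgeSet) →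
      (IsPM (grid m n) P ↔ good n ∅ (F P)) := by
    intro P hP
    rw [good_iff]
    simp only [← loc P hP, IsPM]
    exact ⟨fun h => ⟨fun _ => by trivial, pre_F P, fun i j => h.2 (i, j)⟩,
      fun h => ⟨hP, fun v => h.2.2 v.1 v.2⟩⟩
  rw [h1, T]
  refine Set.ncard_congr (fun P _ => F P) ?_ ?_ ?_
  · intro P hP
    exact (key P hP.1).1 hP
  · intro P Q hP hQ h
    rw [← G_F P hP.1, ← G_F Q hQ.1, h]
  · intro f hf
    have hpre : pre f := ((good_iff n ∅ f).1 hf).2.1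
    refine ⟨G f, ?_, F_G f hpre⟩
    refine (key _ (G_sub f)).2 ?_
    rw [F_G f hpre]
    exact hf

end

end TM

open Matrix in
/-- The transfer-matrix representation of the domino-tiling counts. -/
theorem transfer_matrix_representation (m : ℕ) (hm : 1 ≤ m) :
    ∃ (M : Matrix (Fin (2 ^ m)) (Fin (2 ^ m)) ℕ) (u w : Fin (2 ^ m) → ℕ),
      ∀ n : ℕ, 1 ≤ n → T m n = u ⬝ᵥ (M ^ (n - 1)).mulVec w := by
  classical
  let e : Fin (2 ^ m) ≃ Finset (Fin m) := (Fintype.equivFinOfCardEq (by simp)).symm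
  let M : Matrix (Fin (2 ^ m)) (Fin (2 ^ m)) ℕ := fun a b =>
    ∑ V, if TM.valid (e a) V (e b) then 1 else 0
  let w : Fin (2 ^ m) → ℕ := fun a => TM.cnt 1 (e a)
  have hs : ∀ k a, TM.cnt (k+1) (e a) = (M ^ k).mulVec w a := by
    intro k
    induction k with
    | zero => intro a; simp [w]
    | succ k ih =>
      intro a
      rw [TM.cnt_succ, pow_succ', ← Matrix.mulVec_mulVec, Matrix.mulVec, dotProduct,
        ← Equiv.sum_comp e]
      refine Finset.sum_congr rfl fun b _ => ?_
      rw [← ih b]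
  refine ⟨M, Pi.single (e.symm ∅) 1, w, fun n hn => ?_⟩
  obtain ⟨k, rfl⟩ : ∃ k, n = k + 1 := ⟨n - 1, by omega⟩
  rw [TM.T_eq m _ hn, single_one_dotProduct, Nat.add_sub_cancel, ← hs, Equiv.apply_symm_apply]
end

section
/- Let m, n ≥ 1 and let P be a perfect matching of the grid graph G(m,n). Then for every i with 0 ≤ i ≤ m−2 (rows indexed 0, …, m−1), the number of vertical edges of P joining a vertex in row i to a vertex in row i+1 is congruent to n·(i+1) modulo 2. -/
open Finset

open scoped Classical in
/-- The number of vertical edges in `P` (edges whose endpoints differ in the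
first, i.e. row, coordinate). -/
noncomputable def vert {m n : ℕ} (P : Finset (Sym2 (Fin m × Fin n))) : ℕ :=
  (P.filter (fun e => ∃ p q : Fin m × Fin n, e = s(p, q) ∧ p.1 ≠ q.1)).card

open scoped Classical in
/-- In any perfect matching of the m-by-n grid graph, the number of vertical edges
joining row i to row i+1 is congruent to n·(i+1) mod 2. -/
theorem row_crossing_parity (m n : ℕ) (hm : 1 ≤ m) (hn : 1 ≤ n)
    (P : Finset (Sym2 (Fin m × Fin n))) (hP : IsPM (grid m n) P)
    (i : ℕ) (hi : i + 2 ≤ m) :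
    (P.filter (fun e => ∃ p q : Fin m × Fin n,
        e = s(p, q) ∧ (p.1 : ℕ) = i ∧ (q.1 : ℕ) = i + 1)).card ≡ n * (i + 1) [MOD 2] := by
  obtain ⟨hE, hV⟩ := hP
  set S : Finset (Fin m × Fin n) := univ.filter (fun v => (v.1 : ℕ) ≤ i) with hS
  have hScard : S.card = n * (i + 1) := by
    have h1 : S = (univ.filter (fun a : Fin m => (a : ℕ) ≤ i)) ×ˢ (univ : Finset (Fin n)) := by
      ext v; simp [hS]
    have h2 : (univ.filter (fun a : Fin m => (a : ℕ) ≤ i)) = Finset.Iic (⟨i, by omega⟩ : Fin m) := by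
      ext a; simp [Fin.le_def]
    rw [h1, h2, Finset.card_product, Fin.card_Iic]
    simp [mul_comm]
  have hdc : ∑ v ∈ S, (P.filter (fun e => v ∈ e)).card
      = ∑ e ∈ P, (S.filter (fun v => v ∈ e)).card :=
    Finset.sum_card_bipartiteAbove_eq_sum_card_bipartiteBelow (fun v e => v ∈ e)
  have hone : ∀ v ∈ S, (P.filter (fun e => v ∈ e)).card = 1 := by
    intro v _
    obtain ⟨e, he, hu⟩ := hV v
    rw [Finset.card_eq_one]
    refine ⟨e, ?_⟩
    ext f
    simp only [Finset.mem_filter, Finset.mem_singleton]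
    exact ⟨fun h => hu f h, fun h => h ▸ he⟩
  rw [Finset.sum_congr rfl hone, Finset.sum_const, smul_eq_mul, mul_one, hScard] at hdc
  rw [hdc, Finset.card_filter]
  apply Nat.ModEq.symm
  unfold Nat.ModEq
  refine (Finset.sum_nat_mod _ _ _).trans (Eq.trans ?_ (Finset.sum_nat_mod _ _ _).symm)
  congr 1
  apply Finset.sum_congr rfl
  intro e he
  have hadj := hE e he
  clear he hdc hone
  induction e using Sym2.ind with
  | _ p q =>
  rw [SimpleGraph.mem_edgeSet, grid, SimpleGraph.fromRel_adj] at hadj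
  obtain ⟨hne, hadj⟩ := hadj
  have hcard : (S.filter (fun v => v ∈ s(p, q))).card
      = (if (p.1 : ℕ) ≤ i then 1 else 0) + (if (q.1 : ℕ) ≤ i then 1 else 0) := by
    have : S.filter (fun v => v ∈ s(p, q)) = ({p, q} : Finset _).filter (fun v => (v.1 : ℕ) ≤ i) := by
      ext v; simp [hS, and_comm]
    rw [this, Finset.card_filter, Finset.sum_pair hne]
  have hiff : (∃ p' q' : Fin m × Fin n, s(p, q) = s(p', q') ∧ (p'.1 : ℕ) = i ∧ (q'.1 : ℕ) = i + 1)
      ↔ ((p.1 : ℕ) = i ∧ (q.1 : ℕ) = i + 1) ∨ ((q.1 : ℕ) = i ∧ (p.1 : ℕ) = i + 1) := by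
    constructor
    · rintro ⟨a, b, hab, h1, h2⟩
      rcases Sym2.eq_iff.1 hab with ⟨rfl, rfl⟩ | ⟨rfl, rfl⟩
      · exact Or.inl ⟨h1, h2⟩
      · exact Or.inr ⟨h1, h2⟩
    · rintro (⟨h1, h2⟩ | ⟨h1, h2⟩)
      · exact ⟨p, q, rfl, h1, h2⟩
      · exact ⟨q, p, Sym2.eq_swap, h1, h2⟩
  rw [hcard]
  simp only [hiff]
  simp only [Fin.ext_iff] at hadj
  split_ifs <;> omega
end

section
/- Let m, n ≥ 1 and let P be a perfect matching of the grid graph G(m,n). Then the total number of vertical edges of P is congruent to n·m·(m−1)/2 modulo 2. -/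
open Finset

open scoped Classical in
theorem edge_aux {m n : ℕ} (e : Sym2 (Fin m × Fin n)) (he : e ∈ (grid m n).edgeSet) :
    (∑ v : Fin m × Fin n, if v ∈ e then ((v.1 : ℕ) : ZMod 2) else 0) =
      if (∃ p q : Fin m × Fin n, e = s(p, q) ∧ p.1 ≠ q.1) then 1 else 0 := by
  induction e using Sym2.ind with
  | _ a b =>
    have hab : (grid m n).Adj a b := he
    have hne : a ≠ b := hab.ne
    have h1 : (∑ v : Fin m × Fin n, if v ∈ s(a, b) then ((v.1 : ℕ) : ZMod 2) else 0)
        = ((a.1 : ℕ) : ZMod 2) + ((b.1 : ℕ) : ZMod 2) := by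
      rw [← Finset.sum_filter]
      have : (Finset.univ.filter (fun v => v ∈ s(a, b))) = {a, b} := by
        ext v; simp
      rw [this, Finset.sum_pair hne]
    rw [h1]
    have h2 : (∃ p q : Fin m × Fin n, s(a, b) = s(p, q) ∧ p.1 ≠ q.1) ↔ a.1 ≠ b.1 := by
      constructor
      · rintro ⟨p, q, h, hpq⟩
        rcases Sym2.eq_iff.1 h with ⟨rfl, rfl⟩ | ⟨rfl, rfl⟩
        · exact hpq
        · exact hpq.symm
      · intro h; exact ⟨a, b, rfl, h⟩
    simp only [h2]
    have h20 : (2 : ZMod 2) = 0 := by decide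
    rw [grid, SimpleGraph.fromRel_adj] at hab
    have key : a.1 = b.1 ∨ (a.1 : ℕ) + 1 = b.1 ∨ (b.1 : ℕ) + 1 = a.1 := by
      rcases hab.2 with (h | h) | (h | h)
      · exact Or.inl h.1
      · exact Or.inr (Or.inl h.2)
      · exact Or.inl h.1.symm
      · exact Or.inr (Or.inr h.2)
    rcases key with h | h | h
    · rw [if_neg (by simpa using h), h]
      linear_combination ((b.1 : ℕ) : ZMod 2) * h20
    · rw [if_pos (by intro h'; rw [h'] at h; omega), ← h]
      push_cast
      linear_combination ((a.1 : ℕ) : ZMod 2) * h20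
    · rw [if_pos (by intro h'; rw [h'] at h; omega), ← h]
      push_cast
      linear_combination ((b.1 : ℕ) : ZMod 2) * h20

/-- In any perfect matching of the m-by-n grid graph, the total number of vertical
edges is congruent to n·m·(m−1)/2 mod 2. -/
theorem total_vertical_parity (m n : ℕ) (hm : 1 ≤ m) (hn : 1 ≤ n)
    (P : Finset (Sym2 (Fin m × Fin n))) (hP : IsPM (grid m n) P) :
    vert P ≡ n * (m * (m - 1) / 2) [MOD 2] := by
  classical
  rw [← ZMod.natCast_eq_natCast_iff]
  have hA : ((vert P : ℕ) : ZMod 2) =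
      ∑ e ∈ P, ∑ v : Fin m × Fin n, if v ∈ e then ((v.1 : ℕ) : ZMod 2) else 0 := by
    rw [Finset.sum_congr rfl (fun e he => edge_aux e (hP.1 e he)), vert, Finset.sum_boole]
  have hB : ∀ v : Fin m × Fin n,
      (∑ e ∈ P, if v ∈ e then ((v.1 : ℕ) : ZMod 2) else 0) = ((v.1 : ℕ) : ZMod 2) := by
    intro v
    obtain ⟨e, ⟨heP, hve⟩, huniq⟩ := hP.2 v
    rw [Finset.sum_eq_single e]
    · rw [if_pos hve]
    · intro f hf hne
      rw [if_neg (fun h => hne (huniq f ⟨hf, h⟩))]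
    · intro h; exact absurd heP h
  rw [hA, Finset.sum_comm, Finset.sum_congr rfl (fun v _ => hB v), Fintype.sum_prod_type,
    ← Finset.sum_range_id, ← Fin.sum_univ_eq_sum_range (fun i => i)]
  simp [Finset.mul_sum]
end

section
/- Let m, n ≥ 1. Any two perfect matchings of the grid graph G(m,n) contain the same number of vertical edges modulo 2. -/
open Finset

open scoped Classical in
theorem vert_aux {m n : ℕ} (P : Finset (Sym2 (Fin m × Fin n)))
    (hP : IsPM (grid m n) P) :
    ((vert P : ℕ) : ZMod 2) = ∑ v : Fin m × Fin n, ((v.1 : ℕ) : ZMod 2) := by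
  have h1 : ∀ v : Fin m × Fin n, ((v.1 : ℕ) : ZMod 2) =
      ∑ e ∈ P, if v ∈ e then ((v.1 : ℕ) : ZMod 2) else 0 := by
    intro v
    obtain ⟨e, ⟨he, hv⟩, hu⟩ := hP.2 v
    rw [Finset.sum_eq_single e]
    · simp [hv]
    · intro b hb hne
      rw [if_neg]
      intro hvb
      exact hne (hu b ⟨hb, hvb⟩)
    · intro h
      exact absurd he h
  rw [Finset.sum_congr rfl (fun v _ => h1 v), Finset.sum_comm, vert, Finset.card_filter,
    Nat.cast_sum]
  refine Finset.sum_congr rfl ?_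
  intro e he
  have hE := hP.1 e he
  induction e using Sym2.ind with
  | _ p q =>
    have h2 : (∑ v : Fin m × Fin n, if v ∈ s(p, q) then ((v.1 : ℕ) : ZMod 2) else 0)
        = ((p.1 : ℕ) : ZMod 2) + ((q.1 : ℕ) : ZMod 2) := by
      have hne : p ≠ q := (SimpleGraph.mem_edgeSet _ |>.1 hE).ne
      rw [← Finset.sum_filter, ← Finset.sum_pair (f := fun v : Fin m × Fin n => ((v.1 : ℕ) : ZMod 2)) hne]
      refine Finset.sum_congr ?_ (fun _ _ => rfl)
      ext v
      simp
    rw [h2]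
    have h3 : (∃ a b : Fin m × Fin n, s(p, q) = s(a, b) ∧ a.1 ≠ b.1) ↔ p.1 ≠ q.1 := by
      constructor
      · rintro ⟨a, b, h, hab⟩
        rcases Sym2.eq_iff.1 h with ⟨rfl, rfl⟩ | ⟨rfl, rfl⟩
        · exact hab
        · exact hab.symm
      · intro h
        exact ⟨p, q, rfl, h⟩
    simp only [h3]
    have two : ∀ x : ZMod 2, x + x = 0 := by decide
    rw [SimpleGraph.mem_edgeSet, grid, SimpleGraph.fromRel_adj] at hE
    by_cases hpq : p.1 = q.1
    · simp [hpq, two]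
    · have : (p.1 : ℕ) + 1 = q.1 ∨ (q.1 : ℕ) + 1 = p.1 := by
        rcases hE.2 with (h | h) | (h | h)
        · exact absurd h.1 hpq
        · exact Or.inl h.2
        · exact absurd h.1.symm hpq
        · exact Or.inr h.2
      rw [if_pos hpq]
      rcases this with h | h
      · rw [← h]; push_cast; rw [← add_assoc, two, zero_add]
      · rw [← h]; push_cast; rw [add_right_comm, two, zero_add]

/-- Any two perfect matchings of the m-by-n grid graph contain the same number of
vertical edges modulo 2. -/
theorem vertical_parity_invariant (m n : ℕ) (hm : 1 ≤ m) (hn : 1 ≤ n)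
    (P Q : Finset (Sym2 (Fin m × Fin n)))
    (hP : IsPM (grid m n) P) (hQ : IsPM (grid m n) Q) :
    vert P ≡ vert Q [MOD 2] := by
  rw [← ZMod.natCast_eq_natCast_iff, vert_aux P hP, vert_aux Q hQ]
end

section
/- Let m ≥ 1 and a, b ≥ 0, and let H be the weighted graph on vertex set Fin m × Fin (a+b+4) whose horizontal edges are all pairs {(i,j),(i,j+1)} (weight +1) and whose vertical edges are the pairs {(i,j),(i+1,j)} with j ∈ {1,…,a} ∪ {a+3,…,a+b+2} (0-indexed), each of weight −1. (H is the adjunction G(m,−a)G(m,−b) of the two signed graphs.) Then the signed number of perfect matchings of H, i.e., the sum over perfect matchings of (−1)^(number of vertical edges), equals M(G(m,−(a+b))). -/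
open Finset

open scoped Classical in
/-- The finset of all perfect matchings of a graph on a finite vertex type. -/
noncomputable def pmFinset {V : Type*} [Fintype V] [DecidableEq V]
    (G : SimpleGraph V) : Finset (Finset (Sym2 V)) :=
  Finset.univ.filter (fun P => IsPM G P)

/-- The underlying graph of the signed graph `G(m,-k)`: all horizontal edges, and
vertical edges only in columns 1 through k (0-indexed). -/
def negGrid (m k : ℕ) : SimpleGraph (Fin m × Fin (k + 2)) :=
  SimpleGraph.fromRel (fun p q =>
    (p.1 = q.1 ∧ (p.2 : ℕ) + 1 = q.2) ∨
    (p.2 = q.2 ∧ (p.1 : ℕ) + 1 = q.1 ∧ 1 ≤ (p.2 : ℕ) ∧ (p.2 : ℕ) ≤ k))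

/-- The signed number of matchings `M(G(m,-k))`: every vertical edge has weight -1,
every horizontal edge weight +1. -/
noncomputable def Msigned (m k : ℕ) : ℤ :=
  ∑ P ∈ pmFinset (negGrid m k), (-1 : ℤ) ^ vert P


/-- The adjunction `G(m,-a)G(m,-b)`: the graph on `Fin m × Fin (a+b+4)` with all
horizontal edges (weight +1) and vertical edges of weight -1 exactly in columns
`1,…,a` and `a+3,…,a+b+2` (0-indexed). -/
def adjoinNegNeg (m a b : ℕ) : SimpleGraph (Fin m × Fin (a + b + 4)) :=
  SimpleGraph.fromRel (fun p q =>
    (p.1 = q.1 ∧ (p.2 : ℕ) + 1 = q.2) ∨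
    (p.2 = q.2 ∧ (p.1 : ℕ) + 1 = q.1 ∧
      ((1 ≤ (p.2 : ℕ) ∧ (p.2 : ℕ) ≤ a) ∨ (a + 3 ≤ (p.2 : ℕ) ∧ (p.2 : ℕ) ≤ a + b + 2))))

open scoped Classical in
/-- Fixed-point-free involutions along edges, encoding perfect matchings. -/
noncomputable def invs {V : Type*} [Fintype V] [DecidableEq V] (G : SimpleGraph V) :
    Finset (V → V) :=
  Finset.univ.filter (fun f => (∀ v, f (f v) = v) ∧ ∀ v, G.Adj v (f v))

theorem sum_pm_eq {m n : ℕ} (G : SimpleGraph (Fin m × Fin n)) :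
    ∑ P ∈ pmFinset G, (-1 : ℤ) ^ vert P =
      ∑ f ∈ invs G, (-1 : ℤ) ^ (Finset.univ.filter (fun v => v.1 < (f v).1)).card := by
  classical
  symm
  have key : ∀ f : Fin m × Fin n → Fin m × Fin n, (∀ v, f (f v) = v) →
      ∀ v w, (v ∈ s(w, f w) → s(w, f w) = s(v, f v)) := by
    intro f hf v w h
    rw [Sym2.mem_iff] at h
    rcases h with h | h
    · rw [h]
    · rw [h, hf, Sym2.eq_swap]
  refine Finset.sum_bij (fun f _ => Finset.univ.image (fun v => s(v, f v))) ?_ ?_ ?_ ?_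
  · intro f hf
    simp only [invs, Finset.mem_filter, Finset.mem_univ, true_and] at hf
    simp only [pmFinset, Finset.mem_filter, Finset.mem_univ, true_and]
    refine ⟨?_, ?_⟩
    · intro e he
      simp only [Finset.mem_image, Finset.mem_univ, true_and] at he
      obtain ⟨v, rfl⟩ := he
      exact hf.2 v
    · intro v
      refine ⟨s(v, f v), ⟨Finset.mem_image_of_mem _ (Finset.mem_univ v), by simp⟩, ?_⟩
      rintro e ⟨he, hv⟩
      simp only [Finset.mem_image, Finset.mem_univ, true_and] at he
      obtain ⟨w, rfl⟩ := he
      exact key f hf.1 v w hv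
  · intro f hf g hg h
    simp only [invs, Finset.mem_filter, Finset.mem_univ, true_and] at hf hg
    funext v
    have h1 : s(v, f v) ∈ Finset.univ.image (fun v => s(v, f v)) :=
      Finset.mem_image_of_mem _ (Finset.mem_univ v)
    rw [h] at h1
    simp only [Finset.mem_image, Finset.mem_univ, true_and] at h1
    obtain ⟨w, hw⟩ := h1
    have h2 : v ∈ s(w, g w) := by rw [hw]; simp
    have := key g hg.1 v w h2
    rw [hw] at this
    exact Sym2.congr_right.1 this
  · intro P hP
    simp only [pmFinset, Finset.mem_filter, Finset.mem_univ, true_and] at hP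
    obtain ⟨hE, hU⟩ := hP
    have hex : ∀ v, ∃ w, s(v, w) ∈ P := by
      intro v
      obtain ⟨e, ⟨he, hv⟩, -⟩ := hU v
      obtain ⟨w, rfl⟩ := Sym2.mem_iff_exists.1 hv
      exact ⟨w, he⟩
    choose f hf using hex
    have huniq : ∀ v w, s(v, w) ∈ P → w = f v := by
      intro v w h
      have := (hU v).unique ⟨h, by simp⟩ ⟨hf v, by simp⟩
      exact Sym2.congr_right.1 this
    refine ⟨f, ?_, ?_⟩
    · simp only [invs, Finset.mem_filter, Finset.mem_univ, true_and]
      refine ⟨fun v => ?_, fun v => hE _ (hf v)⟩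
      have := hf v
      rw [Sym2.eq_swap] at this
      exact (huniq _ _ this).symm
    · ext e
      simp only [Finset.mem_image, Finset.mem_univ, true_and]
      constructor
      · rintro ⟨v, rfl⟩
        exact hf v
      · intro he
        induction e with
        | h x y => exact ⟨x, by rw [huniq x y he]⟩
  · intro f hf
    simp only [invs, Finset.mem_filter, Finset.mem_univ, true_and] at hf
    congr 1
    unfold vert
    refine Finset.card_bij (fun v _ => s(v, f v)) ?_ ?_ ?_
    · intro v hv
      simp only [Finset.mem_filter, Finset.mem_univ, true_and] at hv
      simp only [Finset.mem_filter, Finset.mem_image, Finset.mem_univ, true_and]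
      exact ⟨⟨v, rfl⟩, v, f v, rfl, hv.ne⟩
    · intro v hv w hw h
      simp only [Finset.mem_filter, Finset.mem_univ, true_and] at hv hw
      rw [Sym2.eq_iff] at h
      rcases h with h | h
      · exact h.1
      · rw [h.2, h.1] at hv
        exact absurd hv (not_lt.2 hw.le)
    · intro e he
      simp only [Finset.mem_filter, Finset.mem_image, Finset.mem_univ, true_and] at he
      obtain ⟨⟨v, rfl⟩, p, q, hpq, hne⟩ := he
      have hne' : v.1 ≠ (f v).1 := by
        rw [Sym2.eq_iff] at hpq
        rcases hpq with h | h
        · rw [h.2, h.1]; exact hne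
        · rw [h.2, h.1]; exact hne.symm
      rcases lt_or_gt_of_ne hne' with h | h
      · exact ⟨v, by simpa using h, rfl⟩
      · exact ⟨f v, by simpa [hf.1] using h, by rw [hf.1, Sym2.eq_swap]⟩

theorem contract {V W I : Type*} [Fintype V] [DecidableEq V] [Fintype W] [DecidableEq W]
    [LinearOrder I] (G : SimpleGraph V) (H : SimpleGraph W)
    (rV : V → I) (rW : W → I) (φ : V → W) (ψ : W → V) (X Y : I → V) (B C : I → W)
    (hψφ : ∀ v, ψ (φ v) = v) (hψB : ∀ i, ψ (B i) = Y i) (hψC : ∀ i, ψ (C i) = X i)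
    (hφB : ∀ v i, φ v ≠ B i) (hφC : ∀ v i, φ v ≠ C i) (hBC : ∀ i j, B i ≠ C j)
    (hXY : ∀ i j, X i ≠ Y j)
    (hrφ : ∀ v, rW (φ v) = rV v) (hrX : ∀ i, rV (X i) = i) (hrY : ∀ i, rV (Y i) = i)
    (hrB : ∀ i, rW (B i) = i) (hrC : ∀ i, rW (C i) = i)
    (hcases : ∀ w, (∃ v, w = φ v) ∨ (∃ i, w = B i) ∨ ∃ i, w = C i)
    (hadj : ∀ u v, H.Adj (φ u) (φ v) ↔
      G.Adj u v ∧ (∀ i, ¬ (u = X i ∧ v = Y i)) ∧ (∀ i, ¬ (u = Y i ∧ v = X i)))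
    (hB : ∀ i w, H.Adj (B i) w ↔ w = φ (X i) ∨ w = C i)
    (hC : ∀ i w, H.Adj (C i) w ↔ w = B i ∨ w = φ (Y i))
    (hGXY : ∀ i, G.Adj (X i) (Y i)) :
    ∑ f ∈ invs H, (-1 : ℤ) ^ (Finset.univ.filter (fun w => rW w < rW (f w))).card =
    ∑ f ∈ invs G, (-1 : ℤ) ^ (Finset.univ.filter (fun v => rV v < rV (f v))).card := by
  classical
  have hφ : Function.Injective φ := fun u v h => by rw [← hψφ u, h, hψφ]
  let Bk : (V → V) → W → W := fun g w =>
    if w = B (rW w) then (if g (X (rW w)) = Y (rW w) then φ (X (rW w)) else C (rW w))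
    else if w = C (rW w) then (if g (X (rW w)) = Y (rW w) then φ (Y (rW w)) else B (rW w))
    else if g (X (rW w)) = Y (rW w) ∧ w = φ (X (rW w)) then B (rW w)
    else if g (X (rW w)) = Y (rW w) ∧ w = φ (Y (rW w)) then C (rW w)
    else φ (g (ψ w))
  have bB : ∀ g i, Bk g (B i) = if g (X i) = Y i then φ (X i) else C i := by
    intro g i; simp [Bk, hrB]
  have bC : ∀ g i, Bk g (C i) = if g (X i) = Y i then φ (Y i) else B i := by
    intro g i; simp [Bk, hrC, (hBC _ _).symm]
  have bφ : ∀ g v, Bk g (φ v) = if g (X (rV v)) = Y (rV v) ∧ v = X (rV v) then B (rV v)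
      else if g (X (rV v)) = Y (rV v) ∧ v = Y (rV v) then C (rV v) else φ (g v) := by
    intro g v; simp [Bk, hrφ, hφB, hφC, hψφ, hφ.eq_iff]
  clear_value Bk
  -- structure of involutions on H
  have sH : ∀ f : W → W, (∀ v, f (f v) = v) → (∀ v, H.Adj v (f v)) → ∀ i,
      (f (B i) = C i ∧ f (C i) = B i) ∨
      (f (B i) = φ (X i) ∧ f (φ (X i)) = B i ∧ f (C i) = φ (Y i) ∧ f (φ (Y i)) = C i) := by
    intro f h1 h2 i
    have e1 := (hB _ _).1 (h2 (B i))
    have e2 := (hC _ _).1 (h2 (C i))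
    have e3 := h1 (B i)
    have e4 := h1 (C i)
    grind
  have sφ : ∀ f : W → W, (∀ v, f (f v) = v) → (∀ v, H.Adj v (f v)) → ∀ v,
      (v = X (rV v) ∧ f (φ v) = B (rV v)) ∨ (v = Y (rV v) ∧ f (φ v) = C (rV v)) ∨
      ∃ u, f (φ v) = φ u ∧ f (φ u) = φ v ∧ ψ (f (φ v)) = u ∧ G.Adj v u ∧ 
        (∀ i, ¬ (v = X i ∧ u = Y i)) ∧ (∀ i, ¬ (v = Y i ∧ u = X i)) := by
    intro f h1 h2 v
    rcases hcases (f (φ v)) with ⟨u, hu⟩ | ⟨i, hi⟩ | ⟨i, hi⟩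
    · right; right
      have := h2 (φ v)
      rw [hu, hadj] at this
      exact ⟨u, hu, by rw [← hu, h1], by rw [hu, hψφ], this⟩
    · left
      have h3 := h1 (φ v)
      have := sH f h1 h2 i
      grind
    · right; left
      have h3 := h1 (φ v)
      have := sH f h1 h2 i
      grind
  refine Finset.sum_bij' (fun f _ v => ψ (f (φ v))) (fun g _ => Bk g) ?_ ?_ ?_ ?_ ?_
  · intro f hf
    simp only [invs, Finset.mem_filter, Finset.mem_univ, true_and] at hf ⊢
    obtain ⟨h1, h2⟩ := hf
    have h3 := sH f h1 h2
    refine ⟨fun v => ?_, fun v => ?_⟩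
    · rcases sφ f h1 h2 v with h | h | h
      · have := h3 (rV v); grind
      · have := h3 (rV v); grind
      · grind
    · rcases sφ f h1 h2 v with h | h | h
      · have := hGXY (rV v); grind
      · have := (hGXY (rV v)).symm; grind
      · grind
  · intro g hg
    simp only [invs, Finset.mem_filter, Finset.mem_univ, true_and] at hg ⊢
    obtain ⟨h1, h2⟩ := hg
    refine ⟨fun w => ?_, fun w => ?_⟩
    · rcases hcases w with ⟨v, rfl⟩ | ⟨i, rfl⟩ | ⟨i, rfl⟩
      · have := h1 v
        have := bφ g v
        have := bφ g (g v)
        have := h1 (X (rV v))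
        have := h1 (X (rV (g v)))
        have := bB g (rV v)
        have := bC g (rV v)
        grind
      · have := h1 (X i)
        have := bB g i
        have := bC g i
        have := bφ g (X i)
        grind
      · have := h1 (X i)
        have := bB g i
        have := bC g i
        have := bφ g (Y i)
        grind
    · rcases hcases w with ⟨v, rfl⟩ | ⟨i, rfl⟩ | ⟨i, rfl⟩
      · rw [bφ]
        split_ifs with c1 c2
        · rw [H.adj_comm, hB]; grind
        · rw [H.adj_comm, hC]; grind
        · rw [hadj]
          refine ⟨h2 v, ?_, ?_⟩
          · grind
          · rintro i ⟨e1, e2⟩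
            have := h1 v
            grind
      · rw [hB, bB]; grind
      · rw [hC, bC]; grind
  · intro f hf
    simp only [invs, Finset.mem_filter, Finset.mem_univ, true_and] at hf
    obtain ⟨h1, h2⟩ := hf
    have h3 := sH f h1 h2
    have h4 := sφ f h1 h2
    have h5 : ∀ i, ψ (f (φ (X i))) = Y i ↔ f (φ (X i)) = B i := by
      intro i
      have := h4 (X i)
      grind
    funext w
    rcases hcases w with ⟨v, rfl⟩ | ⟨i, rfl⟩ | ⟨i, rfl⟩
    · rw [bφ]
      simp only [h5]
      have := h3 (rV v)
      have := h4 v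
      grind
    · rw [bB]
      simp only [h5]
      have := h3 i
      grind
    · rw [bC]
      simp only [h5]
      have := h3 i
      grind
  · intro g hg
    simp only [invs, Finset.mem_filter, Finset.mem_univ, true_and] at hg
    obtain ⟨h1, h2⟩ := hg
    funext v
    simp only [bφ]
    have := h1 (X (rV v))
    grind
  · intro f hf
    simp only [invs, Finset.mem_filter, Finset.mem_univ, true_and] at hf
    obtain ⟨h1, h2⟩ := hf
    have h3 := sH f h1 h2
    have h4 := sφ f h1 h2
    have h6 : ∀ v, rV (ψ (f (φ v))) = rW (f (φ v)) := by
      intro v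
      have := h4 v
      grind
    congr 1
    symm
    refine Finset.card_bij (fun v _ => φ v) ?_ ?_ ?_
    · intro v hv
      simpa [h6, hrφ] using hv
    · intro u _ v _ h
      exact hφ h
    · intro w hw
      simp only [Finset.mem_filter, Finset.mem_univ, true_and] at hw
      rcases hcases w with ⟨v, rfl⟩ | ⟨i, rfl⟩ | ⟨i, rfl⟩
      · exact ⟨v, by simpa [h6, hrφ] using hw, rfl⟩
      · exfalso
        have := h3 i
        grind
      · exfalso
        have := h3 i
        grind

/-- The signed matching count of the adjunction `G(m,-a)G(m,-b)` equals
`M(G(m,-(a+b)))`. -/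
theorem adjunction_neg_neg (m a b : ℕ) (hm : 1 ≤ m) :
    ∑ P ∈ pmFinset (adjoinNegNeg m a b), (-1 : ℤ) ^ vert P = Msigned m (a + b) := by
  unfold Msigned
  rw [sum_pm_eq, sum_pm_eq]
  refine contract (negGrid m (a + b)) (adjoinNegNeg m a b) Prod.fst Prod.fst
    (fun v => (v.1, if h : (v.2 : ℕ) ≤ a then ⟨v.2, by omega⟩ else ⟨v.2 + 2, by omega⟩))
    (fun w => (w.1, if h : (w.2 : ℕ) ≤ a + 1 then ⟨w.2, by omega⟩ else ⟨w.2 - 2, by omega⟩))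
    (fun i => (i, ⟨a, by omega⟩)) (fun i => (i, ⟨a + 1, by omega⟩))
    (fun i => (i, ⟨a + 1, by omega⟩)) (fun i => (i, ⟨a + 2, by omega⟩))
    ?_ ?_ ?_ ?_ ?_ ?_ ?_ ?_ ?_ ?_ ?_ ?_ ?_ ?_ ?_ ?_ ?_
  · rintro ⟨i, j, hj⟩
    grind
  · grind
  · grind
  · grind
  · grind
  · grind
  · grind
  · grind
  · grind
  · grind
  · grind
  · grind
  · rintro ⟨i, j, hj⟩
    by_cases h1 : j ≤ a
    · exact Or.inl ⟨(i, ⟨j, by omega⟩), by grind⟩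
    by_cases h2 : j = a + 1
    · exact Or.inr (Or.inl ⟨i, by grind⟩)
    by_cases h3 : j = a + 2
    · exact Or.inr (Or.inr ⟨i, by grind⟩)
    · exact Or.inl ⟨(i, ⟨j - 2, by omega⟩), by grind⟩
  · rintro ⟨i, j, hj⟩ ⟨k, l, hl⟩
    simp only [adjoinNegNeg, negGrid, SimpleGraph.fromRel_adj]
    have e : ∀ x : Fin m, ((i, (⟨j, hj⟩ : Fin (a + b + 2))) = (x, ⟨a, by omega⟩) ∧
        (k, (⟨l, hl⟩ : Fin (a + b + 2))) = (x, ⟨a + 1, by omega⟩)) ↔ 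
        ((i : ℕ) = x ∧ j = a ∧ (k : ℕ) = x ∧ l = a + 1) := by
      intro x; simp [Prod.ext_iff, Fin.ext_iff, and_assoc]
    have e' : ∀ x : Fin m, ((i, (⟨j, hj⟩ : Fin (a + b + 2))) = (x, ⟨a + 1, by omega⟩) ∧
        (k, (⟨l, hl⟩ : Fin (a + b + 2))) = (x, ⟨a, by omega⟩)) ↔ 
        ((i : ℕ) = x ∧ j = a + 1 ∧ (k : ℕ) = x ∧ l = a) := by
      intro x; simp [Prod.ext_iff, Fin.ext_iff, and_assoc]
    simp only [e, e']
    have q1 : (∀ x : Fin m, ¬ ((i : ℕ) = x ∧ j = a ∧ (k : ℕ) = x ∧ l = a + 1)) ↔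
        ¬ ((i : ℕ) = k ∧ j = a ∧ l = a + 1) := by
      constructor
      · intro h hh; exact h i (by omega)
      · intro h x hh; exact h (by omega)
    have q2 : (∀ x : Fin m, ¬ ((i : ℕ) = x ∧ j = a + 1 ∧ (k : ℕ) = x ∧ l = a)) ↔
        ¬ ((i : ℕ) = k ∧ j = a + 1 ∧ l = a) := by
      constructor
      · intro h hh; exact h i (by omega)
      · intro h x hh; exact h (by omega)
    rw [q1, q2]
    split_ifs <;> simp only [ne_eq, Prod.ext_iff, Fin.ext_iff] <;> omega
  · rintro i ⟨k, l, hl⟩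
    simp only [adjoinNegNeg, SimpleGraph.fromRel_adj]
    simp only [ne_eq, Prod.ext_iff, Fin.ext_iff, le_refl, dite_true]
    omega
  · rintro i ⟨k, l, hl⟩
    simp only [adjoinNegNeg, SimpleGraph.fromRel_adj]
    have : ¬ (a + 1 ≤ a) := by omega
    simp only [ne_eq, Prod.ext_iff, Fin.ext_iff, this, dite_false]
    omega
  · intro i
    simp [negGrid, SimpleGraph.fromRel_adj]
end

section
/- Let m ≥ 1 and a, b ≥ 1, and let H(a,b) be the weighted graph on vertex set Fin m × Fin (a+b+2) whose horizontal edges are all pairs {(i,j),(i,j+1)} (weight +1) and whose vertical edges are the pairs {(i,j),(i+1,j)} with j ∈ {0,…,a−1} (weight +1) together with the pairs {(i,j),(i+1,j)} with j ∈ {a+1,…,a+b} (weight −1). (H(a,b) is the adjunction G(m,a)G(m,−b).) Then the signed number of perfect matchings of H(a,b) — the sum over perfect matchings of the product of edge weights, i.e., of (−1)^(number of negative vertical edges) — equals the signed number of perfect matchings of H(a−1, b−1). -/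
open Finset

/-- The adjunction `H(a,b) = G(m,a)G(m,-b)`: the graph on `Fin m × Fin (a+b+2)`
with all horizontal edges (weight +1), vertical edges of weight +1 in columns
`0,…,a-1`, and vertical edges of weight -1 in columns `a+1,…,a+b` (0-indexed). -/
def adjoinPosNeg (m a b : ℕ) : SimpleGraph (Fin m × Fin (a + b + 2)) :=
  SimpleGraph.fromRel (fun p q =>
    (p.1 = q.1 ∧ (p.2 : ℕ) + 1 = q.2) ∨
    (p.2 = q.2 ∧ (p.1 : ℕ) + 1 = q.1 ∧
      ((p.2 : ℕ) < a ∨ (a + 1 ≤ (p.2 : ℕ) ∧ (p.2 : ℕ) ≤ a + b))))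

open scoped Classical in
/-- The signed matching count of `H(a,b)`: each perfect matching contributes the
product of its edge weights, i.e. `(-1)^(number of negative vertical edges)`,
the negative vertical edges being those in columns `a+1,…,a+b`. -/
noncomputable def signedCount (m a b : ℕ) : ℤ :=
  ∑ P ∈ pmFinset (adjoinPosNeg m a b),
    (-1 : ℤ) ^ (P.filter (fun e => ∃ p q : Fin m × Fin (a + b + 2),
      e = s(p, q) ∧ p.1 ≠ q.1 ∧ a + 1 ≤ (p.2 : ℕ) ∧ (p.2 : ℕ) ≤ a + b)).card

def Ok (m a b : ℕ) (c : ℕ × ℕ × Bool) : Prop :=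
  c.1 < m ∧ c.2.1 < a + b + 2 ∧ ((c.2.2 = true ∧ 1 ≤ c.2.1) ∨
    (c.2.2 = false ∧ 1 ≤ c.1 ∧ (c.2.1 < a ∨ (a + 1 ≤ c.2.1 ∧ c.2.1 ≤ a + b))))

def One4 (A B C D : Prop) : Prop :=
  (A ∧ ¬B ∧ ¬C ∧ ¬D) ∨ (¬A ∧ B ∧ ¬C ∧ ¬D) ∨ (¬A ∧ ¬B ∧ C ∧ ¬D) ∨ (¬A ∧ ¬B ∧ ¬C ∧ D)

def Good (m a b : ℕ) (C : Finset (ℕ × ℕ × Bool)) : Prop :=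
  (∀ i j k, (i, j, k) ∈ C → Ok m a b (i, j, k)) ∧ ∀ i j, i < m → j < a + b + 2 →
    One4 ((i, j, true) ∈ C) ((i, j + 1, true) ∈ C) ((i, j, false) ∈ C) ((i + 1, j, false) ∈ C)

open scoped Classical in
noncomputable def goods (m a b : ℕ) : Finset (Finset (ℕ × ℕ × Bool)) :=
  (Finset.range m ×ˢ Finset.range (a + b + 2) ×ˢ Finset.univ).powerset.filter (Good m a b)

lemma mem_goods {m a b : ℕ} {C : Finset (ℕ × ℕ × Bool)} : C ∈ goods m a b ↔ Good m a b C := by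
  simp only [goods, Finset.mem_filter, Finset.mem_powerset, and_iff_right_iff_imp]
  rintro h ⟨i, j, k⟩ hc
  have := h.1 i j k hc
  simp only [Ok] at this
  simp [this.1, this.2.1]

def negs (a : ℕ) (C : Finset (ℕ × ℕ × Bool)) : Finset (ℕ × ℕ × Bool) :=
  C.filter (fun c => c.2.2 = false ∧ a + 1 ≤ c.2.1)

def code {m n : ℕ} : Sym2 (Fin m × Fin n) → ℕ × ℕ × Bool :=
  Sym2.lift ⟨fun p q => (max (p.1 : ℕ) q.1, max (p.2 : ℕ) q.2, decide ((p.1 : ℕ) = q.1)), by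
    intro p q
    simp [max_comm, eq_comm]⟩

lemma code_mk {m n : ℕ} (p q : Fin m × Fin n) : code s(p, q) =
  (max (p.1 : ℕ) q.1, max (p.2 : ℕ) q.2, decide ((p.1 : ℕ) = q.1)) := rfl

lemma adj_iff {m a b : ℕ} (i i' : Fin m) (j j' : Fin (a + b + 2)) :
    (adjoinPosNeg m a b).Adj (i, j) (i', j') ↔
     ((i : ℕ) = i' ∧ ((j : ℕ) + 1 = j' ∨ (j' : ℕ) + 1 = j)) ∨
     ((j : ℕ) = j' ∧ ((i : ℕ) + 1 = i' ∨ (i' : ℕ) + 1 = i) ∧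
       ((j : ℕ) < a ∨ (a + 1 ≤ (j : ℕ) ∧ (j : ℕ) ≤ a + b))) := by
  simp only [adjoinPosNeg, SimpleGraph.fromRel_adj, ne_eq, Prod.mk.injEq, Fin.ext_iff]
  omega

lemma code_ok {m a b : ℕ} (e : Sym2 (Fin m × Fin (a + b + 2)))
    (he : e ∈ (adjoinPosNeg m a b).edgeSet) : Ok m a b (code e) := by
  induction e using Sym2.ind with
  | _ p q =>
    obtain ⟨⟨i, hi⟩, ⟨j, hj⟩⟩ := p
    obtain ⟨⟨i', hi'⟩, ⟨j', hj'⟩⟩ := q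
    rw [SimpleGraph.mem_edgeSet, adj_iff] at he
    simp only [code_mk, Ok, decide_eq_true_eq, decide_eq_false_iff_not] at *
    omega

lemma code_inj {m a b : ℕ} (e f : Sym2 (Fin m × Fin (a + b + 2)))
    (he : e ∈ (adjoinPosNeg m a b).edgeSet) (hf : f ∈ (adjoinPosNeg m a b).edgeSet)
    (h : code e = code f) : e = f := by
  induction e using Sym2.ind with
  | _ p q =>
  induction f using Sym2.ind with
  | _ r s =>
    obtain ⟨⟨i, hi⟩, ⟨j, hj⟩⟩ := p
    obtain ⟨⟨i', hi'⟩, ⟨j', hj'⟩⟩ := q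
    obtain ⟨⟨k, hk⟩, ⟨l, hl⟩⟩ := r
    obtain ⟨⟨k', hk'⟩, ⟨l', hl'⟩⟩ := s
    rw [SimpleGraph.mem_edgeSet, adj_iff] at he hf
    simp only [code_mk, Prod.mk.injEq, decide_eq_decide, Sym2.eq_iff, Fin.mk.injEq] at *
    omega

lemma code_surj {m a b : ℕ} (c : ℕ × ℕ × Bool) (hc : Ok m a b c) :
    ∃ e ∈ (adjoinPosNeg m a b).edgeSet, code e = c := by
  obtain ⟨i, j, k⟩ := c
  simp only [Ok] at hc
  obtain ⟨hi, hj, ⟨rfl, h⟩ | ⟨rfl, h⟩⟩ := hc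
  · refine ⟨s((⟨i, hi⟩, ⟨j - 1, by omega⟩), (⟨i, hi⟩, ⟨j, hj⟩)), ?_, ?_⟩
    · rw [SimpleGraph.mem_edgeSet, adj_iff]
      exact Or.inl ⟨rfl, Or.inl (show j - 1 + 1 = j by omega)⟩
    · simp [code_mk]
  · refine ⟨s((⟨i - 1, by omega⟩, ⟨j, hj⟩), (⟨i, hi⟩, ⟨j, hj⟩)), ?_, ?_⟩
    · rw [SimpleGraph.mem_edgeSet, adj_iff]
      exact Or.inr ⟨rfl, Or.inl (show i - 1 + 1 = i by omega), h.2⟩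
    · simp [code_mk]; omega

lemma code_mem {m a b : ℕ} (e : Sym2 (Fin m × Fin (a + b + 2)))
    (he : e ∈ (adjoinPosNeg m a b).edgeSet) (v : Fin m × Fin (a + b + 2)) :
    v ∈ e ↔ code e = ((v.1 : ℕ), (v.2 : ℕ), true) ∨ code e = ((v.1 : ℕ), (v.2 : ℕ) + 1, true) ∨
      code e = ((v.1 : ℕ), (v.2 : ℕ), false) ∨ code e = ((v.1 : ℕ) + 1, (v.2 : ℕ), false) := by
  induction e using Sym2.ind with
  | _ p q =>
    obtain ⟨⟨i, hi⟩, ⟨j, hj⟩⟩ := p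
    obtain ⟨⟨i', hi'⟩, ⟨j', hj'⟩⟩ := q
    obtain ⟨⟨k, hk⟩, ⟨l, hl⟩⟩ := v
    rw [SimpleGraph.mem_edgeSet, adj_iff] at he
    simp only [code_mk, Prod.mk.injEq, Sym2.mem_iff, decide_eq_true_eq, decide_eq_false_iff_not,
      Fin.mk.injEq] at *
    omega

lemma code_neg {m a b : ℕ} (e : Sym2 (Fin m × Fin (a + b + 2)))
    (he : e ∈ (adjoinPosNeg m a b).edgeSet) :
    (∃ p q : Fin m × Fin (a + b + 2),
      e = s(p, q) ∧ p.1 ≠ q.1 ∧ a + 1 ≤ (p.2 : ℕ) ∧ (p.2 : ℕ) ≤ a + b) ↔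
    ((code e).2.2 = false ∧ a + 1 ≤ (code e).2.1) := by
  constructor
  · rintro ⟨⟨i, j⟩, ⟨i', j'⟩, rfl, h1, h2, h3⟩
    rw [SimpleGraph.mem_edgeSet, adj_iff] at he
    simp only [code_mk, decide_eq_false_iff_not, ne_eq, Fin.ext_iff] at *
    omega
  · induction e using Sym2.ind with
    | _ p q =>
    intro h
    refine ⟨p, q, rfl, ?_⟩
    obtain ⟨i, j⟩ := p
    obtain ⟨i', j'⟩ := q
    rw [SimpleGraph.mem_edgeSet, adj_iff] at he
    simp only [code_mk, decide_eq_false_iff_not, ne_eq, Fin.ext_iff] at *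
    omega

lemma one4_iff (C : Finset (ℕ × ℕ × Bool)) (i j : ℕ) :
    One4 ((i, j, true) ∈ C) ((i, j + 1, true) ∈ C) ((i, j, false) ∈ C) ((i + 1, j, false) ∈ C) ↔
    ∃! c, c ∈ C ∧ (c = (i, j, true) ∨ c = (i, j + 1, true) ∨ c = (i, j, false) ∨
      c = (i + 1, j, false)) := by
  constructor
  · rintro (h | h | h | h)
    · refine ⟨(i, j, true), ⟨h.1, by simp⟩, ?_⟩
      rintro c ⟨h1, rfl | rfl | rfl | rfl⟩ <;> simp_all
    · refine ⟨(i, j + 1, true), ⟨h.2.1, by simp⟩, ?_⟩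
      rintro c ⟨h1, rfl | rfl | rfl | rfl⟩ <;> simp_all
    · refine ⟨(i, j, false), ⟨h.2.2.1, by simp⟩, ?_⟩
      rintro c ⟨h1, rfl | rfl | rfl | rfl⟩ <;> simp_all
    · refine ⟨(i + 1, j, false), ⟨h.2.2.2, by simp⟩, ?_⟩
      rintro c ⟨h1, rfl | rfl | rfl | rfl⟩ <;> simp_all
  · rintro ⟨c, ⟨h1, h2⟩, h3⟩
    have e1 := fun h => h3 (i, j, true) ⟨h, by simp⟩
    have e2 := fun h => h3 (i, j + 1, true) ⟨h, by simp⟩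
    have e3 := fun h => h3 (i, j, false) ⟨h, by simp⟩
    have e4 := fun h => h3 (i + 1, j, false) ⟨h, by simp⟩
    unfold One4
    rcases h2 with rfl | rfl | rfl | rfl <;> simp at e1 e2 e3 e4 <;> tauto

lemma pm_good {m a b : ℕ} (P : Finset (Sym2 (Fin m × Fin (a + b + 2))))
    (hP : ∀ e ∈ P, e ∈ (adjoinPosNeg m a b).edgeSet) :
    IsPM (adjoinPosNeg m a b) P ↔ Good m a b (P.image code) := by
  have key : ∀ v : Fin m × Fin (a + b + 2), (∃! e, e ∈ P ∧ v ∈ e) ↔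
      ∃! c, c ∈ P.image code ∧ (c = ((v.1 : ℕ), (v.2 : ℕ), true) ∨ c = ((v.1 : ℕ), (v.2 : ℕ) + 1, true) ∨
      c = ((v.1 : ℕ), (v.2 : ℕ), false) ∨ c = ((v.1 : ℕ) + 1, (v.2 : ℕ), false)) := by
    intro v
    constructor
    · rintro ⟨e, ⟨h1, h2⟩, h3⟩
      refine ⟨code e, ⟨Finset.mem_image_of_mem _ h1, (code_mem e (hP e h1) v).1 h2⟩, ?_⟩
      rintro c ⟨hc, hc2⟩
      obtain ⟨f, hf, rfl⟩ := Finset.mem_image.1 hc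
      rw [h3 f ⟨hf, (code_mem f (hP f hf) v).2 hc2⟩]
    · rintro ⟨c, ⟨h1, h2⟩, h3⟩
      obtain ⟨f, hf, rfl⟩ := Finset.mem_image.1 h1
      refine ⟨f, ⟨hf, (code_mem f (hP f hf) v).2 h2⟩, ?_⟩
      rintro e ⟨he, hv⟩
      exact code_inj _ _ (hP e he) (hP f hf)
        (h3 _ ⟨Finset.mem_image_of_mem _ he, (code_mem e (hP e he) v).1 hv⟩)
  constructor
  · rintro ⟨-, h⟩
    refine ⟨?_, ?_⟩
    · intro i j k hc
      obtain ⟨f, hf, h⟩ := Finset.mem_image.1 hc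
      rw [← h]
      exact code_ok f (hP f hf)
    · intro i j hi hj
      rw [one4_iff]
      exact (key (⟨i, hi⟩, ⟨j, hj⟩)).1 (h _)
  · rintro ⟨-, h⟩
    refine ⟨hP, fun v => (key v).2 ?_⟩
    have := h v.1 v.2 v.1.2 v.2.2
    rwa [one4_iff] at this

open scoped Classical in
lemma signedCount_eq (m a b : ℕ) :
    signedCount m a b = ∑ C ∈ goods m a b, (-1 : ℤ) ^ (negs a C).card := by
  unfold signedCount
  refine Finset.sum_bij (fun P _ => P.image code) ?_ ?_ ?_ ?_
  · intro P hP
    simp only [pmFinset, Finset.mem_filter] at hP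
    rw [mem_goods]
    exact (pm_good P hP.2.1).1 hP.2
  · intro P hP Q hQ h
    simp only [pmFinset, Finset.mem_filter] at hP hQ
    ext e
    constructor
    · intro he
      have := Finset.mem_image_of_mem code he
      rw [h] at this
      obtain ⟨f, hf, h'⟩ := Finset.mem_image.1 this
      rwa [← code_inj f e (hQ.2.1 f hf) (hP.2.1 e he) h']
    · intro he
      have := Finset.mem_image_of_mem code he
      rw [← h] at this
      obtain ⟨f, hf, h'⟩ := Finset.mem_image.1 this
      rwa [← code_inj f e (hP.2.1 f hf) (hQ.2.1 e he) h']
  · intro C hC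
    rw [mem_goods] at hC
    let P : Finset (Sym2 (Fin m × Fin (a + b + 2))) :=
      Finset.univ.filter (fun e => e ∈ (adjoinPosNeg m a b).edgeSet ∧ code e ∈ C)
    have hP : ∀ e ∈ P, e ∈ (adjoinPosNeg m a b).edgeSet := fun e he => (Finset.mem_filter.1 he).2.1
    have hI : P.image code = C := by
      ext ⟨i, j, k⟩
      rw [Finset.mem_image]
      constructor
      · rintro ⟨e, he, h⟩
        rw [← h]
        exact (Finset.mem_filter.1 he).2.2
      · intro h
        obtain ⟨e, he, h'⟩ := code_surj _ (hC.1 i j k h)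
        exact ⟨e, Finset.mem_filter.2 ⟨Finset.mem_univ _, he, h' ▸ h⟩, h'⟩
    refine ⟨P, ?_, hI⟩
    simp only [pmFinset, Finset.mem_filter, Finset.mem_univ, true_and]
    rw [pm_good P hP, hI]
    exact hC
  · intro P hP
    simp only [pmFinset, Finset.mem_filter] at hP
    congr 1
    rw [negs, Finset.filter_image, Finset.card_image_of_injOn]
    · congr 1
      apply Finset.filter_congr
      intro e he
      exact code_neg e (hP.2.1 e he)
    · intro e he f hf h
      exact code_inj e f (hP.2.1 e (Finset.mem_filter.1 he).1) (hP.2.1 f (Finset.mem_filter.1 hf).1) h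

def HasV (A : ℕ) (C : Finset (ℕ × ℕ × Bool)) (r : ℕ) : Prop :=
  (r + 1, A, false) ∈ C ∨ (r + 1, A + 2, false) ∈ C

def XX (A r : ℕ) : Finset (ℕ × ℕ × Bool) :=
  {(r + 1, A, false), (r + 1, A + 2, false), (r, A + 1, true), (r + 1, A + 1, true),
    (r, A + 2, true), (r + 1, A + 2, true)}

def flp (A : ℕ) (C : Finset (ℕ × ℕ × Bool)) (r : ℕ) : Finset (ℕ × ℕ × Bool) :=
  symmDiff C (XX A r)

lemma mem_XX_t (A r i j : ℕ) : (i, j, true) ∈ XX A r ↔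
    (i = r ∨ i = r + 1) ∧ (j = A + 1 ∨ j = A + 2) := by
  simp [XX]; omega

lemma mem_XX_f (A r i j : ℕ) : (i, j, false) ∈ XX A r ↔
    i = r + 1 ∧ (j = A ∨ j = A + 2) := by
  simp [XX]; omega

lemma mem_flp_t (A r i j : ℕ) (C) : (i, j, true) ∈ flp A C r ↔
    (((i = r ∨ i = r + 1) ∧ (j = A + 1 ∨ j = A + 2)) ↔ (i, j, true) ∉ C) := by
  rw [flp, Finset.mem_symmDiff, mem_XX_t]; tauto

lemma mem_flp_f (A r i j : ℕ) (C) : (i, j, false) ∈ flp A C r ↔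
    ((i = r + 1 ∧ (j = A ∨ j = A + 2)) ↔ (i, j, false) ∉ C) := by
  rw [flp, Finset.mem_symmDiff, mem_XX_f]; tauto

lemma local_state {m A B r : ℕ} {C : Finset (ℕ × ℕ × Bool)} (hC : Good m (A + 1) (B + 1) C)
    (h : HasV A C r) : r + 1 < m ∧
    ((r + 1, A + 2, false) ∈ C ↔ (r + 1, A, false) ∉ C) ∧
    ((r, A + 1, true) ∈ C ↔ (r + 1, A, false) ∉ C) ∧
    ((r + 1, A + 1, true) ∈ C ↔ (r + 1, A, false) ∉ C) ∧
    ((r, A + 2, true) ∈ C ↔ (r + 1, A, false) ∈ C) ∧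
    ((r + 1, A + 2, true) ∈ C ↔ (r + 1, A, false) ∈ C) := by
  obtain ⟨h1, h2⟩ := hC
  have hr : r + 1 < m := by
    rcases h with h | h
    · exact (h1 _ _ _ h).1
    · exact (h1 _ _ _ h).1
  refine ⟨hr, ?_⟩
  have v : ∀ i, (i, A + 1, false) ∉ C := by
    intro i hi
    have := h1 _ _ _ hi
    simp [Ok] at this
  have e1 := h2 r A (by omega) (by omega)
  have e2 := h2 (r + 1) A (by omega) (by omega)
  have e3 := h2 r (A + 1) (by omega) (by omega)
  have e4 := h2 (r + 1) (A + 1) (by omega) (by omega)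
  have e5 := h2 r (A + 2) (by omega) (by omega)
  have e6 := h2 (r + 1) (A + 2) (by omega) (by omega)
  have v1 := v r
  have v2 := v (r + 1)
  have v3 := v (r + 1 + 1)
  unfold HasV at h
  simp only [One4, add_assoc, Nat.reduceAdd] at *
  grind

lemma hasV_flp {m A B r : ℕ} {C : Finset (ℕ × ℕ × Bool)} (hC : Good m (A + 1) (B + 1) C)
    (h : HasV A C r) (s : ℕ) : HasV A (flp A C r) s ↔ HasV A C s := by
  obtain ⟨-, h1, -⟩ := local_state hC h
  simp only [HasV, mem_flp_f] at *
  by_cases hs : s = r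
  · subst hs
    simp
    tauto
  · simp [hs]

lemma good_flp {m A B r : ℕ} {C : Finset (ℕ × ℕ × Bool)} (hC : Good m (A + 1) (B + 1) C)
    (h : HasV A C r) : Good m (A + 1) (B + 1) (flp A C r) := by
  obtain ⟨hr, s1, s2, s3, s4, s5⟩ := local_state hC h
  obtain ⟨h1, h2⟩ := hC
  refine ⟨?_, ?_⟩
  · rintro i j (_ | _) hc
    · rw [mem_flp_f] at hc
      by_cases hx : i = r + 1 ∧ (j = A ∨ j = A + 2)
      · simp [Ok]; omega
      · exact h1 _ _ _ (by tauto)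
    · rw [mem_flp_t] at hc
      by_cases hx : (i = r ∨ i = r + 1) ∧ (j = A + 1 ∨ j = A + 2)
      · simp [Ok]; omega
      · exact h1 _ _ _ (by tauto)
  · intro i j hi hj
    have e := h2 i j hi hj
    simp only [mem_flp_t, mem_flp_f]
    by_cases hx : (i = r ∨ i = r + 1) ∧ (j = A ∨ j = A + 1 ∨ j = A + 2)
    · obtain ⟨rfl | rfl, rfl | rfl | rfl⟩ := hx <;>
      simp [One4] at e ⊢ <;> grind
    · have n1 : ¬ ((i = r ∨ i = r + 1) ∧ (j = A + 1 ∨ j = A + 2)) := by omega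
      have n2 : ¬ ((i = r ∨ i = r + 1) ∧ (j + 1 = A + 1 ∨ j + 1 = A + 2)) := by omega
      have n3 : ¬ (i = r + 1 ∧ (j = A ∨ j = A + 2)) := by omega
      have n4 : ¬ (i + 1 = r + 1 ∧ (j = A ∨ j = A + 2)) := by omega
      simp only [n1, n2, n3, n4, false_iff, not_not]
      exact e

lemma negs_flp (A r : ℕ) (C : Finset (ℕ × ℕ × Bool)) :
    negs (A + 1) (flp A C r) = symmDiff (negs (A + 1) C) {(r + 1, A + 2, false)} := by
  ext ⟨i, j, k⟩
  cases k
  · simp only [negs, Finset.mem_filter, Finset.mem_symmDiff, mem_flp_f, Finset.mem_singleton,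
      Prod.mk.injEq]
    by_cases h : j = A + 2
    · subst h; simp; tauto
    · by_cases h2 : j = A
      · subst h2; simp
      · simp [h, h2]
  · simp [negs, Finset.mem_symmDiff]

lemma pow_symmDiff (N : Finset (ℕ × ℕ × Bool)) (x) :
    (-1 : ℤ) ^ N.card + (-1 : ℤ) ^ (symmDiff N {x}).card = 0 := by
  by_cases h : x ∈ N
  · have : symmDiff N {x} = N.erase x := by
      ext y
      by_cases hy : y = x
      · subst hy; simp [Finset.mem_symmDiff, h]
      · simp [Finset.mem_symmDiff, hy]
    rw [this, ← Finset.card_erase_add_one h, pow_succ]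
    ring
  · have : symmDiff N {x} = insert x N := by
      ext y
      by_cases hy : y = x
      · subst hy; simp [Finset.mem_symmDiff, h]
      · simp [Finset.mem_symmDiff, hy]
    rw [this, Finset.card_insert_of_notMem h, pow_succ]
    ring

noncomputable def row (A : ℕ) (C : Finset (ℕ × ℕ × Bool)) : ℕ := sInf {r | HasV A C r}

open scoped Classical in
lemma bad_zero (m A B : ℕ) :
    ∑ C ∈ (goods m (A + 1) (B + 1)).filter (fun C => ∃ r, HasV A C r),
      (-1 : ℤ) ^ (negs (A + 1) C).card = 0 := by
  have hrow : ∀ C, (∃ r, HasV A C r) → HasV A C (row A C) := fun C h => Nat.sInf_mem h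
  have main : ∀ C ∈ (goods m (A + 1) (B + 1)).filter (fun C => ∃ r, HasV A C r),
      Good m (A + 1) (B + 1) C ∧ HasV A C (row A C) := by
    intro C hC
    rw [Finset.mem_filter, mem_goods] at hC
    exact ⟨hC.1, hrow C hC.2⟩
  have hsum : ∀ C r, (-1 : ℤ) ^ (negs (A + 1) C).card +
      (-1 : ℤ) ^ (negs (A + 1) (flp A C r)).card = 0 := by
    intro C r
    rw [negs_flp, pow_symmDiff]
  refine Finset.sum_involution (fun C _ => flp A C (row A C)) ?_ ?_ ?_ ?_
  · intro C hC
    exact hsum _ _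
  · intro C hC h0 heq
    have := hsum C (row A C)
    rw [heq] at this
    omega
  · intro C hC
    obtain ⟨h1, h2⟩ := main C hC
    rw [Finset.mem_filter, mem_goods]
    exact ⟨good_flp h1 h2, row A C, (hasV_flp h1 h2 _).2 h2⟩
  · intro C hC
    obtain ⟨h1, h2⟩ := main C hC
    have : row A (flp A C (row A C)) = row A C := by
      conv_lhs => rw [row]
      simp only [hasV_flp h1 h2]
      rfl
    simp only [this]
    simp [flp]

def gg (A : ℕ) (c : ℕ × ℕ × Bool) : ℕ × ℕ × Bool :=
  (c.1, if c.2.1 ≤ A then c.2.1 else c.2.1 + 2, c.2.2)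

lemma gg_inj (A : ℕ) : Function.Injective (gg A) := by
  rintro ⟨i, j, k⟩ ⟨i', j', k'⟩ h
  simp only [gg, Prod.mk.injEq] at *
  refine ⟨h.1, ?_, h.2.2⟩
  have := h.2.1
  split_ifs at this <;> omega

noncomputable def shrink (A : ℕ) (C : Finset (ℕ × ℕ × Bool)) : Finset (ℕ × ℕ × Bool) :=
  C.preimage (gg A) (gg_inj A).injOn

lemma mem_shrink (A : ℕ) (C) (i j k) : (i, j, k) ∈ shrink A C ↔
    (i, (if j ≤ A then j else j + 2), k) ∈ C := by
  simp [shrink, gg]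

def expand (m A B : ℕ) (D : Finset (ℕ × ℕ × Bool)) : Finset (ℕ × ℕ × Bool) :=
  (Finset.range m ×ˢ Finset.range (A + B + 4) ×ˢ Finset.univ).filter (fun c =>
    (c.2.2 = true ∧ (c.1, (if c.2.1 ≤ A + 1 then c.2.1 else c.2.1 - 2), true) ∈ D) ∨
    (c.2.2 = false ∧ c.2.1 ≠ A + 1 ∧ (c.1, (if c.2.1 ≤ A then c.2.1 else c.2.1 - 2), false) ∈ D))

lemma mem_expand_t {m A B : ℕ} {D : Finset (ℕ × ℕ × Bool)} (hD : Good m A B D) (i j) :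
    (i, j, true) ∈ expand m A B D ↔ (i, (if j ≤ A + 1 then j else j - 2), true) ∈ D := by
  simp only [expand, Finset.mem_filter, Finset.mem_product, Finset.mem_range, Finset.mem_univ,
    and_true]
  constructor
  · simp
  · intro h
    have := hD.1 _ _ _ h
    simp only [Ok] at this
    refine ⟨?_, by simpa using h⟩
    split_ifs at this <;> omega

lemma mem_expand_f {m A B : ℕ} {D : Finset (ℕ × ℕ × Bool)} (hD : Good m A B D) (i j) :
    (i, j, false) ∈ expand m A B D ↔ j ≠ A + 1 ∧ (i, (if j ≤ A then j else j - 2), false) ∈ D := by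
  simp only [expand, Finset.mem_filter, Finset.mem_product, Finset.mem_range, Finset.mem_univ,
    and_true]
  constructor
  · simp
  · rintro ⟨h0, h⟩
    have := hD.1 _ _ _ h
    simp only [Ok] at this
    refine ⟨?_, by simpa [h0] using h⟩
    split_ifs at this <;> omega

lemma good_expand {m A B : ℕ} {D : Finset (ℕ × ℕ × Bool)} (hD : Good m A B D) :
    Good m (A + 1) (B + 1) (expand m A B D) := by
  have hA : ∀ i, (i, A, false) ∉ D := by
    intro i hi
    have := hD.1 _ _ _ hi
    simp [Ok] at this
  refine ⟨?_, ?_⟩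
  · rintro i j (_ | _) hc
    · rw [mem_expand_f hD] at hc
      have := hD.1 _ _ _ hc.2
      simp [Ok] at this ⊢
      split_ifs at this <;> omega
    · rw [mem_expand_t hD] at hc
      have := hD.1 _ _ _ hc
      simp [Ok] at this ⊢
      split_ifs at this <;> omega
  · intro i j hi hj
    simp only [mem_expand_f hD, mem_expand_t hD]
    have e0 := hD.2 i A hi (by omega)
    have a1 := hA i
    have a2 := hA (i + 1)
    rcases lt_trichotomy j (A + 1) with h | h | h
    · have e := hD.2 i j hi (by omega)
      have c1 : j ≤ A + 1 := by omega
      have c2 : j + 1 ≤ A + 1 := by omega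
      have c3 : j ≤ A := by omega
      have c4 : j ≠ A + 1 := by omega
      simpa [c1, c2, c3, c4] using e
    · subst h
      simp [One4] at e0 ⊢
      tauto
    · rcases Nat.lt_or_ge (A + 2) j with h' | h'
      · obtain ⟨j, rfl⟩ : ∃ k, j = k + 2 := ⟨j - 2, by omega⟩
        have e := hD.2 i j hi (by omega)
        have c1 : ¬ j + 2 ≤ A + 1 := by omega
        have c2 : ¬ j + 2 + 1 ≤ A + 1 := by omega
        have c3 : ¬ j + 2 ≤ A := by omega
        have c4 : j + 2 ≠ A + 1 := by omega
        have c5 : j + 2 + 1 - 2 = j + 1 := by omega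
        simp only [c1, c2, c3, c4, c5, if_false, ne_eq, not_false_eq_true, true_and,
          Nat.add_sub_cancel]
        exact e
      · obtain rfl : j = A + 2 := by omega
        have c5 : A + 2 + 1 - 2 = A + 1 := by omega
        simp [One4, c5] at e0 ⊢
        tauto

lemma nohasV_expand {m A B : ℕ} {D : Finset (ℕ × ℕ × Bool)} (hD : Good m A B D) :
    ¬ ∃ r, HasV A (expand m A B D) r := by
  rintro ⟨r, h⟩
  simp only [HasV, mem_expand_f hD] at h
  have : (r + 1, A, false) ∈ D := by simpa using h
  have := hD.1 _ _ _ this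
  simp [Ok] at this

lemma no_vert {m A B : ℕ} {C : Finset (ℕ × ℕ × Bool)} (hC : Good m (A + 1) (B + 1) C)
    (h : ¬ ∃ r, HasV A C r) (i j) (hj : j = A ∨ j = A + 1 ∨ j = A + 2) : (i, j, false) ∉ C := by
  intro hc
  have := hC.1 _ _ _ hc
  simp [Ok] at this
  obtain ⟨i, rfl⟩ : ∃ k, i = k + 1 := ⟨i - 1, by omega⟩
  rcases hj with rfl | rfl | rfl
  · exact h ⟨i, Or.inl hc⟩
  · omega
  · exact h ⟨i, Or.inr hc⟩

lemma mid {m A B : ℕ} {C : Finset (ℕ × ℕ × Bool)} (hC : Good m (A + 1) (B + 1) C)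
    (h : ¬ ∃ r, HasV A C r) (i) (hi : i < m) :
    ((i, A + 1, true) ∈ C ↔ (i, A, true) ∉ C) ∧ ((i, A + 2, true) ∈ C ↔ (i, A, true) ∈ C) ∧
    ((i, A + 3, true) ∈ C ↔ (i, A, true) ∉ C) := by
  have e1 := hC.2 i A hi (by omega)
  have e2 := hC.2 i (A + 1) hi (by omega)
  have e3 := hC.2 i (A + 2) hi (by omega)
  have a1 := no_vert hC h i A (by simp)
  have a2 := no_vert hC h (i + 1) A (by simp)
  have a3 := no_vert hC h i (A + 1) (by simp)
  have a4 := no_vert hC h (i + 1) (A + 1) (by simp)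
  have a5 := no_vert hC h i (A + 2) (by simp)
  have a6 := no_vert hC h (i + 1) (A + 2) (by simp)
  simp only [One4, add_assoc, Nat.reduceAdd] at *
  tauto

lemma good_shrink {m A B : ℕ} {C : Finset (ℕ × ℕ × Bool)} (hC : Good m (A + 1) (B + 1) C)
    (h : ¬ ∃ r, HasV A C r) : Good m A B (shrink A C) := by
  refine ⟨?_, ?_⟩
  · rintro i j (_ | _) hc
    · rw [mem_shrink] at hc
      have hne : j ≠ A := by
        rintro rfl
        exact no_vert hC h i j (by simp) (by simpa using hc)
      have := hC.1 _ _ _ hc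
      simp [Ok] at this ⊢
      split_ifs at this <;> omega
    · rw [mem_shrink] at hc
      have := hC.1 _ _ _ hc
      simp [Ok] at this ⊢
      split_ifs at this <;> omega
  · intro i j hi hj
    simp only [mem_shrink]
    rcases lt_trichotomy j A with h' | h' | h'
    · have e := hC.2 i j hi (by omega)
      have c1 : j ≤ A := by omega
      have c2 : j + 1 ≤ A := by omega
      simpa [c1, c2] using e
    · subst h'
      have := mid hC h i hi
      have a1 := no_vert hC h i j (by simp)
      have a2 := no_vert hC h (i + 1) j (by simp)
      simp [One4, add_assoc]
      tauto
    · have e := hC.2 i (j + 2) hi (by omega)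
      have c1 : ¬ j ≤ A := by omega
      have c2 : ¬ j + 1 ≤ A := by omega
      have c3 : j + 1 + 2 = j + 2 + 1 := by omega
      simp only [c1, c2, c3, if_false]
      exact e

lemma shrink_expand {m A B : ℕ} {D : Finset (ℕ × ℕ × Bool)} (hD : Good m A B D) :
    shrink A (expand m A B D) = D := by
  ext ⟨i, j, k⟩
  rw [mem_shrink]
  by_cases h : j ≤ A
  · have h1 : j ≤ A + 1 := by omega
    have h2 : j ≠ A + 1 := by omega
    cases k
    · rw [mem_expand_f hD]; simp [h, h2]
    · rw [mem_expand_t hD]; simp [h, h1]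
  · have h1 : ¬ j + 2 ≤ A + 1 := by omega
    have h2 : j + 2 ≠ A + 1 := by omega
    have h3 : ¬ j + 2 ≤ A := by omega
    cases k
    · rw [mem_expand_f hD, if_neg h, if_neg h3, Nat.add_sub_cancel]; exact and_iff_right h2
    · rw [mem_expand_t hD, if_neg h, if_neg h1, Nat.add_sub_cancel]

lemma expand_shrink {m A B : ℕ} {C : Finset (ℕ × ℕ × Bool)} (hC : Good m (A + 1) (B + 1) C)
    (h : ¬ ∃ r, HasV A C r) : expand m A B (shrink A C) = C := by
  have hD := good_shrink hC h
  ext ⟨i, j, k⟩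
  by_cases hi : i < m
  swap
  · constructor
    · intro hc
      exact absurd ((good_expand hD).1 _ _ _ hc).1 hi
    · intro hc
      exact absurd (hC.1 _ _ _ hc).1 hi
  have hm := mid hC h i hi
  cases k
  · rw [mem_expand_f hD, mem_shrink]
    by_cases hj : j = A ∨ j = A + 1 ∨ j = A + 2
    · have n := no_vert hC h i j hj
      have n' := no_vert hC h i A (by simp)
      rcases hj with rfl | rfl | rfl <;> simp [n, n']
    · by_cases h' : j ≤ A
      · have h2 : j ≠ A + 1 := by omega
        simp [h', h2]
      · have h2 : j ≠ A + 1 := by omega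
        have h3 : ¬ j - 2 ≤ A := by omega
        have h4 : j - 2 + 2 = j := by omega
        rw [if_neg h', if_neg h3, h4]; exact and_iff_right h2
  · rw [mem_expand_t hD, mem_shrink]
    rcases Nat.lt_or_ge j (A + 1) with h' | h'
    · have h1 : j ≤ A + 1 := by omega
      have h2 : j ≤ A := by omega
      simp [h1, h2]
    · by_cases h1 : j = A + 1
      · subst h1
        simp [add_assoc]; tauto
      · by_cases h2 : j = A + 2
        · subst h2
          simp; tauto
        · have h1 : ¬ j ≤ A + 1 := by omega
          have h3 : ¬ j - 2 ≤ A := by omega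
          have h4 : j - 2 + 2 = j := by omega
          simp only [h1, if_false, h3, h4]

lemma negs_shrink {m A B : ℕ} {C : Finset (ℕ × ℕ × Bool)} (hC : Good m (A + 1) (B + 1) C)
    (h : ¬ ∃ r, HasV A C r) : (negs (A + 1) C).card = (negs A (shrink A C)).card := by
  rw [← Finset.card_image_of_injective (negs A (shrink A C)) (gg_inj A)]
  congr 1
  ext ⟨i, j, k⟩
  rw [Finset.mem_image]
  constructor
  · intro hc
    simp only [negs, Finset.mem_filter] at hc
    obtain ⟨hc, rfl, hj⟩ := hc
    have hne : j ≠ A + 2 := by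
      rintro rfl
      exact no_vert hC h i _ (by simp) hc
    have h3 : ¬ j - 2 ≤ A := by omega
    have h4 : j - 2 + 2 = j := by omega
    refine ⟨(i, j - 2, false), ?_, ?_⟩
    · simp only [negs, Finset.mem_filter, mem_shrink, h3, if_false, h4]
      exact ⟨hc, by simp, by omega⟩
    · simp only [gg, h3, if_false, h4]
  · rintro ⟨⟨i', j', k'⟩, hc, heq⟩
    simp only [negs, Finset.mem_filter, mem_shrink] at hc ⊢
    obtain ⟨hc, rfl, hj⟩ := hc
    have h3 : ¬ j' ≤ A := by omega
    simp only [gg, h3, if_false, Prod.mk.injEq] at heq hc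
    obtain ⟨rfl, rfl, rfl⟩ := heq
    exact ⟨hc, by simp, by omega⟩

open scoped Classical in
lemma goods_step (m A B : ℕ) :
    ∑ C ∈ goods m (A + 1) (B + 1), (-1 : ℤ) ^ (negs (A + 1) C).card =
    ∑ C ∈ goods m A B, (-1 : ℤ) ^ (negs A C).card := by
  rw [← Finset.sum_filter_add_sum_filter_not _ (fun C => ∃ r, HasV A C r), bad_zero, zero_add]
  refine Finset.sum_bij' (fun C _ => shrink A C) (fun D _ => expand m A B D) ?_ ?_ ?_ ?_ ?_
  · intro C hC
    rw [Finset.mem_filter, mem_goods] at hC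
    rw [mem_goods]
    exact good_shrink hC.1 hC.2
  · intro D hD
    rw [mem_goods] at hD
    rw [Finset.mem_filter, mem_goods]
    exact ⟨good_expand hD, nohasV_expand hD⟩
  · intro C hC
    rw [Finset.mem_filter, mem_goods] at hC
    exact expand_shrink hC.1 hC.2
  · intro D hD
    rw [mem_goods] at hD
    exact shrink_expand hD
  · intro C hC
    rw [Finset.mem_filter, mem_goods] at hC
    rw [negs_shrink hC.1 hC.2]

/-- The signed matching count of `G(m,a)G(m,-b)` equals that of
`G(m,a-1)G(m,-(b-1))`. -/
theorem adjunction_pos_neg_step (m a b : ℕ) (hm : 1 ≤ m) (ha : 1 ≤ a) (hb : 1 ≤ b) :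
    signedCount m a b = signedCount m (a - 1) (b - 1) := by
  obtain ⟨A, rfl⟩ : ∃ A, a = A + 1 := ⟨a - 1, by omega⟩
  obtain ⟨B, rfl⟩ : ∃ B, b = B + 1 := ⟨b - 1, by omega⟩
  rw [signedCount_eq, goods_step, Nat.add_sub_cancel, Nat.add_sub_cancel, signedCount_eq]
end
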